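/- arXiv:2302.08376 — 4 statements merged into one kernel-verified Lean document; each statement's English description precedes it below -/
import Mathlib

section
/- Inside the 2×2 matrices over K = Frac(R), the k-subalgebra generated by the six matrices E₀ = [[1,0],[0,0]], E₁ = [[0,0],[0,1]], U = [[0,a],[0,0]], V = [[0,c],[0,0]], Ū = [[0,0],[1,0]], V̄ = [[0,0],[b/a,0]] is equal to the set of matrices [[p,q],[r,s]] with p, s in the image of R in K, q in the R-submodule I = aR + cR of K, and r in the R-submodule I* = R + (b/a)R of K. -/
/-!
A set of `2 × 2` matrices cut out entrywise by `[[R, I], [J, R]]` is closed under multiplication as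
soon as `IJ ⊆ R`. Conversely, a subalgebra containing the diagonal idempotents contains a matrix
once it contains each of its entries, put in place with zeros elsewhere. If `S` and `T` span `I`
and `J`, the products of off-diagonal generators put `S * T` on both diagonal corners. Here
`{a, c} * {1, b/a} = {a, b, c, d}` because `ad = bc`, and this set generates `R`.
-/

open MvPolynomial

/-- `R = k[a,b,c,d]/(ad - bc)`. -/
abbrev ConeRing (k : Type*) [Field k] : Type _ :=
  MvPolynomial (Fin 4) k ⧸
    Ideal.span {(X 0 * X 3 - X 1 * X 2 : MvPolynomial (Fin 4) k)}

/-- The images of the variables `a, b, c, d` in `R = k[a,b,c,d]/(ad - bc)`. -/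
noncomputable def coneGen (k : Type*) [Field k] (i : Fin 4) : ConeRing k :=
  Ideal.Quotient.mk _ (X i)

section TiledSubalgebra

variable {n R A : Type*} [Fintype n] [DecidableEq n] [CommSemiring R] [Semiring A] [Algebra R A]

/-- The subalgebra of matrices whose `(i, j)` entry lies in `I i j`, for a family `I` of submodules
that contains `R` on the diagonal and is closed under matrix multiplication. It generalizes tiled
orders: `R` need not be a domain nor `A` its fraction field. -/
def tiledSubalgebra (I : n → n → Submodule R A) (one_le : ∀ i, 1 ≤ I i i)
    (mul_le : ∀ i j l, I i j * I j l ≤ I i l) : Subalgebra R (Matrix n n A) where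
  carrier := {M | ∀ i j, M i j ∈ I i j}
  add_mem' hM hN i j := add_mem (hM i j) (hN i j)
  mul_mem' hM hN i l :=
    Submodule.sum_mem _ fun j _ ↦ mul_le i j l (Submodule.mul_mem_mul (hM i j) (hN j l))
  algebraMap_mem' r i j := by
    rw [Matrix.algebraMap_matrix_apply]
    split_ifs with h
    · exact h ▸ one_le i (Submodule.algebraMap_mem r)
    · exact zero_mem _

theorem mem_tiledSubalgebra {I : n → n → Submodule R A} {one_le : ∀ i, 1 ≤ I i i}
    {mul_le : ∀ i j l, I i j * I j l ≤ I i l} {M : Matrix n n A} :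
    M ∈ tiledSubalgebra I one_le mul_le ↔ ∀ i j, M i j ∈ I i j :=
  Iff.rfl

theorem single_mem_tiledSubalgebra {I : n → n → Submodule R A} {one_le : ∀ i, 1 ≤ I i i}
    {mul_le : ∀ i j l, I i j * I j l ≤ I i l} {i j : n} {x : A} (hx : x ∈ I i j) :
    Matrix.single i j x ∈ tiledSubalgebra I one_le mul_le := by
  intro i' j'
  rw [Matrix.single_apply]
  split_ifs with h
  · obtain ⟨rfl, rfl⟩ := h
    exact hx
  · exact zero_mem _

end TiledSubalgebra

section MatrixUnits

variable {n k A : Type*} [Fintype n] [DecidableEq n] [CommSemiring k] [Semiring A] [Algebra k A]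
  {B : Subalgebra k (Matrix n n A)}

theorem mem_of_forall_single_mem {M : Matrix n n A}
    (h : ∀ i j, Matrix.single i j (M i j) ∈ B) : M ∈ B := by
  rw [Matrix.matrix_eq_sum_single M]
  exact sum_mem fun i _ ↦ sum_mem fun j _ ↦ h i j

theorem single_mul_mem {i j l : n} {x y : A} (hx : Matrix.single i j x ∈ B)
    (hy : Matrix.single j l y ∈ B) : Matrix.single i l (x * y) ∈ B := by
  simpa only [Matrix.single_mul_single_same] using B.mul_mem hx hy

theorem single_mem_of_mem_adjoin {i : n} {s : Set A} (hone : Matrix.single i i 1 ∈ B)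
    (hs : ∀ x ∈ s, Matrix.single i i x ∈ B) {x : A} (hx : x ∈ Algebra.adjoin k s) :
    Matrix.single i i x ∈ B := by
  induction hx using Algebra.adjoin_induction with
  | mem x hx => exact hs x hx
  | algebraMap c =>
    rw [Algebra.algebraMap_eq_smul_one, ← Matrix.smul_single]
    exact B.smul_mem hone c
  | add x y _ _ hx hy =>
    rw [Matrix.single_add]
    exact B.add_mem hx hy
  | mul x y _ _ hx hy => exact single_mul_mem hx hy

theorem single_mem_of_mem_span {R : Type*} [CommSemiring R] [Algebra R A] {i j : n} {s : Set A}
    (hR : ∀ r : R, Matrix.single i i (algebraMap R A r) ∈ B)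
    (hs : ∀ x ∈ s, Matrix.single i j x ∈ B) {x : A} (hx : x ∈ Submodule.span R s) :
    Matrix.single i j x ∈ B := by
  induction hx using Submodule.span_induction with
  | mem x hx => exact hs x hx
  | zero =>
    rw [Matrix.single_zero]
    exact B.zero_mem
  | add x y _ _ hx hy =>
    rw [Matrix.single_add]
    exact B.add_mem hx hy
  | smul r x _ hx =>
    rw [Algebra.smul_def]
    exact single_mul_mem (hR r) hx

end MatrixUnits

section TwoByTwo

open scoped Pointwise

variable {k R A : Type*} [CommSemiring k] [CommSemiring R] [CommSemiring A]
  [Algebra k R] [Algebra R A] [Algebra k A] [IsScalarTower k R A] {S T : Set A}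

/-- The matrices `[[p, q], [r, s]]` with `p, s` in the image of `R`, `q ∈ I` and `r ∈ J`: the
ring of the Morita context `(R, R, I, J)` whose pairings are multiplication in `A`. -/
def moritaSubalgebra (I J : Submodule R A) (h : I * J ≤ 1) :
    Subalgebra R (Matrix (Fin 2) (Fin 2) A) :=
  tiledSubalgebra !![1, I; J, 1] (Fin.forall_fin_two.2 ⟨le_rfl, le_rfl⟩)
    (by simp [Fin.forall_fin_two, h, mul_comm J])

theorem mem_moritaSubalgebra {I J : Submodule R A} {h : I * J ≤ 1}
    {M : Matrix (Fin 2) (Fin 2) A} :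
    M ∈ moritaSubalgebra I J h ↔
      (∃ p : R, algebraMap R A p = M 0 0) ∧ (∃ s : R, algebraMap R A s = M 1 1) ∧
        M 0 1 ∈ I ∧ M 1 0 ∈ J := by
  constructor
  · intro hM
    have hentry := mem_tiledSubalgebra.1 hM
    exact ⟨Submodule.mem_one.1 (hentry 0 0), Submodule.mem_one.1 (hentry 1 1),
      hentry 0 1, hentry 1 0⟩
  · rintro ⟨hp, hs, hq, hr⟩
    exact mem_tiledSubalgebra.2 (Fin.forall_fin_two.2
      ⟨Fin.forall_fin_two.2 ⟨Submodule.mem_one.2 hp, hq⟩,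
        Fin.forall_fin_two.2 ⟨hr, Submodule.mem_one.2 hs⟩⟩)

theorem span_mul_span_le_one_of_adjoin_le
    (h : Algebra.adjoin k (S * T) ≤ (IsScalarTower.toAlgHom k R A).range) :
    Submodule.span R S * Submodule.span R T ≤ 1 := by
  rw [Submodule.span_mul_span, Submodule.span_le]
  intro x hx
  exact Submodule.mem_one.2 (h (Algebra.subset_adjoin hx))

/-- The matrices `[[1, 0], [0, 0]]`, `[[0, 0], [0, 1]]`, `[[0, x], [0, 0]]` for `x ∈ S` and
`[[0, 0], [y, 0]]` for `y ∈ T`, generating `[[R, I], [J, R]]` when `S` and `T` span `I` and `J` and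
`S * T` generates `R`. -/
def moritaGenerators (S T : Set A) : Set (Matrix (Fin 2) (Fin 2) A) :=
  {Matrix.single 0 0 1, Matrix.single 1 1 1} ∪ (Matrix.single 0 1 '' S ∪ Matrix.single 1 0 '' T)

theorem moritaGenerators_subset_moritaSubalgebra
    (h : Submodule.span R S * Submodule.span R T ≤ 1) :
    moritaGenerators S T ⊆ moritaSubalgebra (Submodule.span R S) (Submodule.span R T) h := by
  rintro _ ((rfl | rfl) | ⟨x, hx, rfl⟩ | ⟨y, hy, rfl⟩)
  · exact single_mem_tiledSubalgebra (Submodule.one_le.1 le_rfl)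
  · exact single_mem_tiledSubalgebra (Submodule.one_le.1 le_rfl)
  · exact single_mem_tiledSubalgebra (Submodule.subset_span hx)
  · exact single_mem_tiledSubalgebra (Submodule.subset_span hy)

theorem single_algebraMap_mem_adjoin_moritaGenerators
    (h : (IsScalarTower.toAlgHom k R A).range ≤ Algebra.adjoin k (S * T)) (i : Fin 2) (r : R) :
    Matrix.single i i (algebraMap R A r) ∈ Algebra.adjoin k (moritaGenerators S T) := by
  have hS {x} (hx : x ∈ S) : Matrix.single 0 1 x ∈ Algebra.adjoin k (moritaGenerators S T) :=
    Algebra.subset_adjoin (.inr (.inl ⟨x, hx, rfl⟩))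
  have hT {y} (hy : y ∈ T) : Matrix.single 1 0 y ∈ Algebra.adjoin k (moritaGenerators S T) :=
    Algebra.subset_adjoin (.inr (.inr ⟨y, hy, rfl⟩))
  have hr : algebraMap R A r ∈ Algebra.adjoin k (S * T) := h ⟨r, rfl⟩
  have hone : Matrix.single i i 1 ∈ moritaGenerators S T := by
    fin_cases i
    · exact .inl (.inl rfl)
    · exact .inl (.inr rfl)
  refine single_mem_of_mem_adjoin (Algebra.subset_adjoin hone) ?_ hr
  rintro _ ⟨x, hx, y, hy, rfl⟩
  fin_cases i
  · exact single_mul_mem (hS hx) (hT hy)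
  · have hyx := single_mul_mem (hT hy) (hS hx)
    rw [mul_comm] at hyx
    exact hyx

theorem adjoin_moritaGenerators
    (h : Algebra.adjoin k (S * T) = (IsScalarTower.toAlgHom k R A).range) :
    Algebra.adjoin k (moritaGenerators S T) =
      (moritaSubalgebra (Submodule.span R S) (Submodule.span R T)
        (span_mul_span_le_one_of_adjoin_le h.le)).restrictScalars k := by
  refine le_antisymm (Algebra.adjoin_le ?_) fun M hM ↦ ?_
  · rw [Subalgebra.coe_restrictScalars]
    exact moritaGenerators_subset_moritaSubalgebra _
  rw [Subalgebra.mem_restrictScalars] at hM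
  obtain ⟨⟨p, hp⟩, ⟨s, hs⟩, hq, hr⟩ := mem_moritaSubalgebra.1 hM
  have hdiag := single_algebraMap_mem_adjoin_moritaGenerators h.ge
  refine mem_of_forall_single_mem (Fin.forall_fin_two.2
    ⟨Fin.forall_fin_two.2 ⟨hp ▸ hdiag 0 p, ?_⟩, Fin.forall_fin_two.2 ⟨?_, hs ▸ hdiag 1 s⟩⟩)
  · exact single_mem_of_mem_span (hdiag 0)
      (fun x hx ↦ Algebra.subset_adjoin (.inr (.inl ⟨x, hx, rfl⟩))) hq
  · exact single_mem_of_mem_span (hdiag 1)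
      (fun y hy ↦ Algebra.subset_adjoin (.inr (.inr ⟨y, hy, rfl⟩))) hr

theorem moritaGenerators_pair (x y z w : A) :
    moritaGenerators {x, y} {z, w} =
      {!![1, 0; 0, 0], !![0, 0; 0, 1], !![0, x; 0, 0], !![0, y; 0, 0],
        !![0, 0; z, 0], !![0, 0; w, 0]} := by
  have h00 (u : A) : Matrix.single 0 0 u = !![u, 0; 0, 0] := by
    ext i j; fin_cases i <;> fin_cases j <;> rfl
  have h01 (u : A) : Matrix.single 0 1 u = !![0, u; 0, 0] := by
    ext i j; fin_cases i <;> fin_cases j <;> rfl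
  have h10 (u : A) : Matrix.single 1 0 u = !![0, 0; u, 0] := by
    ext i j; fin_cases i <;> fin_cases j <;> rfl
  have h11 (u : A) : Matrix.single 1 1 u = !![0, 0; 0, u] := by
    ext i j; fin_cases i <;> fin_cases j <;> rfl
  simp only [moritaGenerators, Set.image_pair, h00, h01, h10, h11, Set.insert_union,
    Set.singleton_union]

theorem adjoin_six_matrices_eq_general {a b c d : R} {t : A}
    (hgen : Algebra.adjoin k ({a, b, c, d} : Set R) = ⊤)
    (hb : algebraMap R A a * t = algebraMap R A b)
    (hd : algebraMap R A c * t = algebraMap R A d) :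
    (Algebra.adjoin k
        ({!![1, 0; 0, 0], !![0, 0; 0, 1],
          !![0, algebraMap R A a; 0, 0], !![0, algebraMap R A c; 0, 0],
          !![0, 0; 1, 0], !![0, 0; t, 0]} : Set (Matrix (Fin 2) (Fin 2) A)) :
          Set (Matrix (Fin 2) (Fin 2) A)) =
      {M | (∃ p : R, algebraMap R A p = M 0 0) ∧ (∃ s : R, algebraMap R A s = M 1 1) ∧
        M 0 1 ∈ Submodule.span R ({algebraMap R A a, algebraMap R A c} : Set A) ∧
        M 1 0 ∈ Submodule.span R ({1, t} : Set A)} := by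
  have hprod : ({algebraMap R A a, algebraMap R A c} * {1, t} : Set A) =
      IsScalarTower.toAlgHom k R A '' {a, b, c, d} := by
    rw [Set.insert_eq (algebraMap R A a), Set.union_mul]
    simp only [Set.singleton_mul, Set.image_insert_eq, Set.image_singleton, mul_one, hb, hd,
      IsScalarTower.coe_toAlgHom', Set.insert_union, Set.singleton_union]
  have hadjoin : Algebra.adjoin k ({algebraMap R A a, algebraMap R A c} * {1, t} : Set A) =
      (IsScalarTower.toAlgHom k R A).range := by
    rw [hprod, Algebra.adjoin_image, hgen, Algebra.map_top]
  rw [← moritaGenerators_pair, adjoin_moritaGenerators hadjoin,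
    Subalgebra.coe_restrictScalars]
  exact Set.ext fun M ↦ mem_moritaSubalgebra

end TwoByTwo

section ConeRing

variable (k : Type*) [Field k]

theorem coneGen_zero_mul_coneGen_three :
    coneGen k 0 * coneGen k 3 = coneGen k 1 * coneGen k 2 :=
  Ideal.Quotient.eq.2 (Ideal.mem_span_singleton_self _)

theorem coneGen_zero_ne_zero : coneGen k 0 ≠ 0 := by
  intro h
  obtain ⟨q, hq⟩ := Ideal.mem_span_singleton.1 (Ideal.Quotient.eq_zero_iff_mem.1 h)
  -- At the point `(1, 0, 0, 0)` of the cone the coordinate `a` does not vanish.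
  simpa using congrArg (eval (Pi.single 0 (1 : k))) hq

theorem adjoin_coneGen :
    Algebra.adjoin k ({coneGen k 0, coneGen k 1, coneGen k 2, coneGen k 3} : Set (ConeRing k)) =
      ⊤ := by
  let π : MvPolynomial (Fin 4) k →ₐ[k] ConeRing k := Ideal.Quotient.mkₐ k _
  have hπ : Function.Surjective π := Ideal.Quotient.mkₐ_surjective k _
  have himage : π '' Set.range X = {coneGen k 0, coneGen k 1, coneGen k 2, coneGen k 3} := by
    ext x
    simp [π, coneGen, Fin.exists_fin_succ, eq_comm]
  rw [← himage, Algebra.adjoin_image, adjoin_range_X, Algebra.map_top,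
    (AlgHom.range_eq_top π).2 hπ]

theorem coneGen_two_mul_div {K : Type*} [Field K] [Algebra (ConeRing k) K]
    (ha : algebraMap (ConeRing k) K (coneGen k 0) ≠ 0) :
    algebraMap (ConeRing k) K (coneGen k 2) *
        (algebraMap (ConeRing k) K (coneGen k 1) / algebraMap (ConeRing k) K (coneGen k 0)) =
      algebraMap (ConeRing k) K (coneGen k 3) := by
  rw [← mul_div_assoc, div_eq_iff ha, ← map_mul, ← map_mul]
  exact congrArg _ (by linear_combination -coneGen_zero_mul_coneGen_three k)

end ConeRing

set_option synthInstance.maxHeartbeats 1000000 in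
set_option maxHeartbeats 1000000 in
/-- Inside the `2 × 2` matrices over `K = Frac(R)`, `R = k[a,b,c,d]/(ad - bc)`,
the `k`-subalgebra generated by the six matrices
`E₀ = [[1,0],[0,0]]`, `E₁ = [[0,0],[0,1]]`, `U = [[0,a],[0,0]]`,
`V = [[0,c],[0,0]]`, `Ū = [[0,0],[1,0]]`, `V̄ = [[0,0],[b/a,0]]` equals the set
of matrices `[[p,q],[r,s]]` with `p, s` in the image of `R`, `q ∈ I = aR + cR`
and `r ∈ I* = R + (b/a)R`. -/
theorem adjoin_six_matrices_eq (k : Type*) [Field k] [IsDomain (ConeRing k)] :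
    letI K := FractionRing (ConeRing k)
    letI f : ConeRing k →+* K := algebraMap (ConeRing k) K
    (Algebra.adjoin k
        ({!![1, 0; 0, 0], !![0, 0; 0, 1],
          !![0, f (coneGen k 0); 0, 0], !![0, f (coneGen k 2); 0, 0],
          !![0, 0; 1, 0], !![0, 0; f (coneGen k 1) / f (coneGen k 0), 0]} :
          Set (Matrix (Fin 2) (Fin 2) K)) : Set (Matrix (Fin 2) (Fin 2) K))
      = {M : Matrix (Fin 2) (Fin 2) K |
          (∃ p : ConeRing k, f p = M 0 0) ∧ (∃ s : ConeRing k, f s = M 1 1) ∧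
          M 0 1 ∈ Submodule.span (ConeRing k) ({f (coneGen k 0), f (coneGen k 2)} : Set K) ∧
          M 1 0 ∈ Submodule.span (ConeRing k)
            ({1, f (coneGen k 1) / f (coneGen k 0)} : Set K)} := by
  have ha : algebraMap (ConeRing k) (FractionRing (ConeRing k)) (coneGen k 0) ≠ 0 :=
    (map_ne_zero_iff _ (IsFractionRing.injective _ _)).2 (coneGen_zero_ne_zero k)
  exact adjoin_six_matrices_eq_general (adjoin_coneGen k) (mul_div_cancel₀ _ ha)
    (coneGen_two_mul_div k ha)
end

section
/- The center of the k-algebra A is equal to the k-subalgebra of A generated by the four elements a², b², ab + ba, and c². -/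
/-- The relations `ac + ca = 0`, `bc + cb = 0`, `ab - ba - 2c³ = 0` on the free
associative algebra `k⟨a,b,c⟩`; quotienting by the ring congruence they generate
is the quotient by the two-sided ideal generated by these three elements. -/
inductive CdvRel (k : Type*) [Field k] :
    FreeAlgebra k (Fin 3) → FreeAlgebra k (Fin 3) → Prop
  | ac : CdvRel k (FreeAlgebra.ι k 0 * FreeAlgebra.ι k 2
      + FreeAlgebra.ι k 2 * FreeAlgebra.ι k 0) 0
  | bc : CdvRel k (FreeAlgebra.ι k 1 * FreeAlgebra.ι k 2
      + FreeAlgebra.ι k 2 * FreeAlgebra.ι k 1) 0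
  | ab : CdvRel k (FreeAlgebra.ι k 0 * FreeAlgebra.ι k 1
      - FreeAlgebra.ι k 1 * FreeAlgebra.ι k 0 - 2 * FreeAlgebra.ι k 2 ^ 3) 0

/-- The algebra `A = k⟨a,b,c⟩/(ac + ca, bc + cb, ab - ba - 2c³)`. -/
abbrev CdvAlgebra (k : Type*) [Field k] : Type _ := RingQuot (CdvRel k)

/-- The images of the generators `a`, `b`, `c` in `A`. -/
noncomputable def cdvGen (k : Type*) [Field k] (i : Fin 3) : CdvAlgebra k :=
  RingQuot.mkAlgHom k (CdvRel k) (FreeAlgebra.ι k i)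

/-!
Let `Z` be generated by the four central elements, `P = Z + Zc` and `V = ka + kb`. As `c`
anticommutes with `V`, and `2ab = (ab + ba) + 2c³`, one has `VP = PV` and `V² ⊆ P`, so
`A = P + PV`. Commuting with `c` kills the `PV` part of a central element, since `c` commutes with
`P`, anticommutes with `PV` and is regular; commuting with `a` then kills the `Zc` part in the same
way. Regularity of `a` and `c` is read off the basis of monomials `cˡ bⁱ aʲ`, which are linearly
independent because the formulas for left multiplication define a representation on the free module.
-/

section General

variable {k R : Type*}

theorem submodule_eq_top_of_forall_mul_mem [CommSemiring k] [Semiring R] [Algebra k R]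
    {s : Set R} (hs : Algebra.adjoin k s = ⊤) {M : Submodule k R} (one_mem : 1 ∈ M)
    (mul_mem : ∀ x ∈ s, ∀ m ∈ M, x * m ∈ M) : M = ⊤ := by
  have adjoin_mul_mem : ∀ x ∈ Algebra.adjoin k s, ∀ m ∈ M, x * m ∈ M := by
    intro x hx
    induction hx using Algebra.adjoin_induction with
    | mem x hx => exact mul_mem x hx
    | algebraMap r => exact fun m hm ↦ by simpa [Algebra.smul_def] using M.smul_mem r hm
    | add x y _ _ hx hy => exact fun m hm ↦ by simpa [add_mul] using M.add_mem (hx m hm) (hy m hm)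
    | mul x y _ _ hx hy => exact fun m hm ↦ by simpa [mul_assoc] using hx _ (hy m hm)
  exact eq_top_iff.mpr fun x _ ↦ by simpa using adjoin_mul_mem x (hs ▸ trivial) 1 one_mem

theorem adjoin_le_center_of_forall_commute [CommSemiring k] [Semiring R] [Algebra k R]
    {s t : Set R} (hs : Algebra.adjoin k s = ⊤) (hst : ∀ y ∈ t, ∀ x ∈ s, Commute x y) :
    Algebra.adjoin k t ≤ Subalgebra.center k R := by
  have le_centralizer : Algebra.adjoin k s ≤ Subalgebra.centralizer k t :=
    Algebra.adjoin_le fun x hx ↦ Subalgebra.mem_centralizer_iff k |>.mpr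
      fun y hy ↦ (hst y hy x hx).eq.symm
  rw [hs] at le_centralizer
  exact Algebra.adjoin_le fun y hy ↦ Subalgebra.mem_center_iff.mpr fun x ↦
    ((Subalgebra.mem_centralizer_iff k).mp (le_centralizer (Algebra.mem_top (x := x))) y hy).symm

theorem isLeftRegular_of_mul_basis {ι : Type*} [CommSemiring k] [Semiring R] [Algebra k R]
    (B : Module.Basis ι k R) {x : R} {f : ι → ι} (hf : Function.Injective f)
    (hx : ∀ i, x * B i = B (f i)) : IsLeftRegular x := by
  have repr_mul : B.repr.toLinearMap ∘ₗ LinearMap.mulLeft k x =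
      Finsupp.lmapDomain k k f ∘ₗ B.repr.toLinearMap :=
    B.ext fun i ↦ by simp [hx]
  have injective := (Finsupp.mapDomain_injective (M := k) hf).comp B.repr.injective
  refine Function.Injective.of_comp (f := B.repr) ?_
  convert injective using 1
  exact congrArg DFunLike.coe repr_mul

theorem semiconjBy_neg_iff [Ring R] {x y : R} : SemiconjBy x y (-y) ↔ x * y + y * x = 0 := by
  rw [SemiconjBy, neg_mul, add_eq_zero_iff_eq_neg]

theorem semiconjBy_neg_symm [Ring R] {x y : R} (h : SemiconjBy x y (-y)) :
    SemiconjBy y x (-x) :=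
  semiconjBy_neg_iff.mpr <| add_comm (x * y) _ ▸ semiconjBy_neg_iff.mp h

theorem commute_sq_of_semiconjBy_neg [Ring R] {x y : R} (h : SemiconjBy x y (-y)) :
    Commute x (y ^ 2) := by
  simpa [Commute] using h.pow_right 2

theorem eq_zero_of_commute_of_semiconjBy_neg [Ring R] (two_regular : IsLeftRegular (2 : R))
    {x y : R} (hx : IsLeftRegular x) (comm : Commute x y) (anti : SemiconjBy x y (-y)) :
    y = 0 := by
  have two_mul_eq_zero : 2 * (x * y) = 2 * 0 := by
    rw [two_mul, mul_zero]
    nth_rewrite 1 [anti.eq]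
    rw [neg_mul, comm.eq, neg_add_cancel]
  exact hx (by simpa using two_regular two_mul_eq_zero)

end General

/-- A triple of ring elements satisfying the defining relations of `CdvAlgebra`, with
anticommutation encoded as semiconjugation to the negative. -/
structure IsCdvTriple {R : Type*} [Ring R] (a b c : R) : Prop where
  semiconj_ac : SemiconjBy a c (-c)
  semiconj_bc : SemiconjBy b c (-c)
  mul_ab : a * b = b * a + 2 * c ^ 3

/-- The ordered monomial `cˡ bⁱ aʲ` with exponent `(l, i, j)`. With `c` on the left, left
multiplication by each generator changes a monomial by a simple formula. -/
def cdvMonomial {R : Type*} [Monoid R] (a b c : R) (p : ℕ × ℕ × ℕ) : R :=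
  c ^ p.1 * (b ^ p.2.1 * a ^ p.2.2)

/-- The subalgebra generated by `a²`, `b²`, `ab + ba` and `c²`: the expected center. -/
def cdvCentral (k : Type*) {R : Type*} [CommRing k] [Ring R] [Algebra k R] (a b c : R) :
    Subalgebra k R :=
  Algebra.adjoin k {a ^ 2, b ^ 2, a * b + b * a, c ^ 2}

/-- The even part of the `ℤ/2`-grading in which `a` and `b` are odd and `c` is even. These
generators suffice when `2` is invertible, because `2ab = (ab + ba) + 2c³`. -/
def cdvEven (k : Type*) {R : Type*} [CommRing k] [Ring R] [Algebra k R] (a b c : R) :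
    Subalgebra k R :=
  Algebra.adjoin k {a ^ 2, b ^ 2, a * b + b * a, c}

/-- The odd part of the `ℤ/2`-grading in which `a` and `b` are odd and `c` is even. -/
def cdvOdd (k : Type*) {R : Type*} [CommRing k] [Ring R] [Algebra k R] (a b c : R) :
    Submodule k R :=
  (cdvEven k a b c).toSubmodule * Submodule.span k {a, b}

section Even

variable {k R : Type*} [CommRing k] [Ring R] [Algebra k R] {a b c : R}

theorem c_mem_cdvEven : c ∈ cdvEven k a b c := Algebra.subset_adjoin (by simp)

theorem cdvCentral_le_cdvEven : cdvCentral k a b c ≤ cdvEven k a b c := by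
  refine Algebra.adjoin_le ?_
  rintro _ (rfl | rfl | rfl | rfl)
  · exact Algebra.subset_adjoin (by simp)
  · exact Algebra.subset_adjoin (by simp)
  · exact Algebra.subset_adjoin (by simp)
  · exact pow_mem c_mem_cdvEven 2

theorem cdvEven_mul_cdvOdd_le :
    (cdvEven k a b c).toSubmodule * cdvOdd k a b c ≤ cdvOdd k a b c := by
  rw [cdvOdd, ← mul_assoc, (Subalgebra.isIdempotentElem_toSubmodule _).eq]

end Even

namespace IsCdvTriple

section Relations

variable {R : Type*} [Ring R] {a b c : R}

theorem swap (h : IsCdvTriple a b c) : IsCdvTriple b a (-c) where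
  semiconj_ac := h.semiconj_bc.neg_right
  semiconj_bc := h.semiconj_ac.neg_right
  mul_ab := by rw [h.mul_ab]; noncomm_ring

theorem mul_pow_succ (h : IsCdvTriple a b c) (i : ℕ) :
    a * b ^ (i + 1) = b ^ (i + 1) * a + (1 + (-1) ^ i : ℤ) • (c ^ 3 * b ^ i) := by
  induction i with
  | zero => simp [h.mul_ab, two_mul]
  | succ i ih =>
    have mul_c_cube : b * c ^ 3 = -(c ^ 3 * b) := by
      simpa [SemiconjBy, Odd.neg_pow (by decide : Odd 3)] using h.semiconj_bc.pow_right 3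
    calc a * b ^ (i + 1 + 1) = a * b * b ^ (i + 1) := by rw [pow_succ' b (i + 1), mul_assoc]
      _ = b * (a * b ^ (i + 1)) + 2 * (c ^ 3 * b ^ (i + 1)) := by
        rw [h.mul_ab, add_mul, mul_assoc, mul_assoc]
      _ = b ^ (i + 1 + 1) * a + (1 + (-1) ^ i : ℤ) • (b * c ^ 3 * b ^ i)
          + 2 * (c ^ 3 * b ^ (i + 1)) := by
        rw [ih, mul_add, mul_smul_comm, ← mul_assoc, ← pow_succ', mul_assoc b]
      _ = b ^ (i + 1 + 1) * a + (1 + (-1) ^ (i + 1) : ℤ) • (c ^ 3 * b ^ (i + 1)) := by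
        rw [mul_c_cube, neg_mul, mul_assoc, ← pow_succ', two_mul]
        module

theorem commute_a_b_sq (h : IsCdvTriple a b c) : Commute a (b ^ 2) := by
  simpa [Commute, SemiconjBy] using h.mul_pow_succ 1

theorem commute_a_mul_add_mul (h : IsCdvTriple a b c) : Commute a (a * b + b * a) := by
  have comm : a ^ 2 * b = b * a ^ 2 := h.swap.commute_a_b_sq.eq.symm
  rw [Commute, SemiconjBy, mul_add, add_mul, ← mul_assoc, ← sq, comm, mul_assoc b, ← sq,
    mul_assoc, add_comm]

theorem commute_c_mul_add_mul (h : IsCdvTriple a b c) : Commute c (a * b + b * a) := by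
  have ca := semiconjBy_neg_symm h.semiconj_ac
  have cb := semiconjBy_neg_symm h.semiconj_bc
  simpa [Commute] using (ca.mul_right cb).add_right (cb.mul_right ca)

end Relations

section Center

variable {k R : Type*} [CommRing k] [Ring R] [Algebra k R] {a b c : R}

theorem cdvCentral_le_center (h : IsCdvTriple a b c)
    (hgen : Algebra.adjoin k {a, b, c} = ⊤) :
    cdvCentral k a b c ≤ Subalgebra.center k R := by
  have a_b_sq := h.commute_a_b_sq
  have b_a_sq := h.swap.commute_a_b_sq
  have a_c_sq := commute_sq_of_semiconjBy_neg h.semiconj_ac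
  have b_c_sq := commute_sq_of_semiconjBy_neg h.semiconj_bc
  have c_a_sq := commute_sq_of_semiconjBy_neg (semiconjBy_neg_symm h.semiconj_ac)
  have c_b_sq := commute_sq_of_semiconjBy_neg (semiconjBy_neg_symm h.semiconj_bc)
  have a_add := h.commute_a_mul_add_mul
  have b_add : Commute b (a * b + b * a) :=
    add_comm (b * a) (a * b) ▸ h.swap.commute_a_mul_add_mul
  have c_add := h.commute_c_mul_add_mul
  have self_sq (x : R) : Commute x (x ^ 2) := Commute.self_pow x 2
  refine adjoin_le_center_of_forall_commute hgen ?_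
  rintro _ (rfl | rfl | rfl | rfl) _ (rfl | rfl | rfl) <;> first | assumption | exact self_sq _

theorem exists_central_of_mem_cdvEven (h : IsCdvTriple a b c)
    (hgen : Algebra.adjoin k {a, b, c} = ⊤) {p : R} (hp : p ∈ cdvEven k a b c) :
    ∃ z ∈ cdvCentral k a b c, ∃ w ∈ cdvCentral k a b c, p = z + w * c := by
  have comm {z : R} (hz : z ∈ cdvCentral k a b c) (x : R) : x * z = z * x :=
    Subalgebra.mem_center_iff.mp (h.cdvCentral_le_center hgen hz) x
  induction hp using Algebra.adjoin_induction with
  | mem x hx =>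
    rcases hx with rfl | rfl | rfl | rfl
    · exact ⟨a ^ 2, Algebra.subset_adjoin (by simp), 0, zero_mem _, by simp⟩
    · exact ⟨b ^ 2, Algebra.subset_adjoin (by simp), 0, zero_mem _, by simp⟩
    · exact ⟨a * b + b * a, Algebra.subset_adjoin (by simp), 0, zero_mem _, by simp⟩
    · exact ⟨0, zero_mem _, 1, one_mem _, by simp⟩
  | algebraMap r => exact ⟨_, algebraMap_mem _ r, 0, zero_mem _, by simp⟩
  | add x y _ _ hx hy =>
    obtain ⟨z, hz, w, hw, rfl⟩ := hx
    obtain ⟨z', hz', w', hw', rfl⟩ := hy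
    exact ⟨z + z', add_mem hz hz', w + w', add_mem hw hw', by rw [add_mul]; abel⟩
  | mul x y _ _ hx hy =>
    obtain ⟨z, hz, w, hw, rfl⟩ := hx
    obtain ⟨z', hz', w', hw', rfl⟩ := hy
    have c_sq : c ^ 2 ∈ cdvCentral k a b c := Algebra.subset_adjoin (by simp)
    refine ⟨z * z' + w * w' * c ^ 2, add_mem (mul_mem hz hz') (mul_mem (mul_mem hw hw') c_sq),
      z * w' + w * z', add_mem (mul_mem hz hw') (mul_mem hw hz'), ?_⟩
    calc (z + w * c) * (z' + w' * c)
        = z * z' + z * w' * c + w * (c * z') + w * (c * w') * c := by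
          simp only [mul_add, add_mul, mul_assoc]; abel
      _ = z * z' + w * w' * c ^ 2 + (z * w' + w * z') * c := by
          rw [comm hz' c, comm hw' c]; simp only [sq, add_mul, mul_assoc]; abel

theorem semiconjBy_neg_of_mem_span (h : IsCdvTriple a b c) {v : R}
    (hv : v ∈ Submodule.span k {a, b}) : SemiconjBy v c (-c) := by
  induction hv using Submodule.span_induction with
  | mem x hx => rcases hx with rfl | rfl; exacts [h.semiconj_ac, h.semiconj_bc]
  | zero => exact SemiconjBy.zero_left _ _
  | add x y _ _ hx hy => exact hx.add_left hy
  | smul r x _ hx => rw [SemiconjBy, smul_mul_assoc, hx.eq, mul_smul_comm]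

theorem span_mul_cdvEven_le (h : IsCdvTriple a b c) (hgen : Algebra.adjoin k {a, b, c} = ⊤) :
    Submodule.span k {a, b} * (cdvEven k a b c).toSubmodule ≤ cdvOdd k a b c := by
  rw [Submodule.mul_le]
  intro v hv p hp
  obtain ⟨z, hz, w, hw, rfl⟩ := h.exists_central_of_mem_cdvEven hgen hp
  have comm {z : R} (hz : z ∈ cdvCentral k a b c) : v * z = z * v :=
    Subalgebra.mem_center_iff.mp (h.cdvCentral_le_center hgen hz) v
  have conj_mem : z - w * c ∈ cdvEven k a b c :=
    sub_mem (cdvCentral_le_cdvEven hz) (mul_mem (cdvCentral_le_cdvEven hw) c_mem_cdvEven)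
  have : v * (z + w * c) = (z - w * c) * v := by
    rw [mul_add, ← mul_assoc, comm hz, comm hw, mul_assoc, (h.semiconjBy_neg_of_mem_span hv).eq]
    noncomm_ring
  rw [this]
  exact Submodule.mul_mem_mul conj_mem hv

theorem span_mul_span_le (h : IsCdvTriple a b c) (two_isUnit : IsUnit (2 : k)) :
    Submodule.span k {a, b} * Submodule.span k {a, b} ≤ (cdvEven k a b c).toSubmodule := by
  have add_mem_even : a * b + b * a ∈ cdvEven k a b c := Algebra.subset_adjoin (by simp)
  have two_c_cube : 2 * c ^ 3 ∈ cdvEven k a b c :=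
    mul_mem (ofNat_mem _ 2) (pow_mem c_mem_cdvEven 3)
  rw [Submodule.span_mul_span, Submodule.span_le, Set.mul_subset_iff]
  simp only [Set.mem_insert_iff, Set.mem_singleton_iff, forall_eq_or_imp, forall_eq]
  refine ⟨⟨?_, ?_⟩, ?_, ?_⟩
  · exact sq a ▸ Algebra.subset_adjoin (by simp)
  · refine (Submodule.smul_mem_iff_of_isUnit _ two_isUnit).mp ?_
    have : (2 : k) • (a * b) = a * b + b * a + 2 * c ^ 3 := by
      rw [two_smul, add_assoc, ← h.mul_ab]
    exact this ▸ add_mem add_mem_even two_c_cube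
  · refine (Submodule.smul_mem_iff_of_isUnit _ two_isUnit).mp ?_
    have : (2 : k) • (b * a) = a * b + b * a - 2 * c ^ 3 := by
      rw [two_smul, h.mul_ab]; abel
    exact this ▸ sub_mem add_mem_even two_c_cube
  · exact sq b ▸ Algebra.subset_adjoin (by simp)

theorem span_mul_cdvOdd_le (h : IsCdvTriple a b c) (two_isUnit : IsUnit (2 : k))
    (hgen : Algebra.adjoin k {a, b, c} = ⊤) :
    Submodule.span k {a, b} * cdvOdd k a b c ≤ (cdvEven k a b c).toSubmodule :=
  calc Submodule.span k {a, b} * cdvOdd k a b c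
      = Submodule.span k {a, b} * (cdvEven k a b c).toSubmodule * Submodule.span k {a, b} :=
        (mul_assoc _ _ _).symm
    _ ≤ cdvOdd k a b c * Submodule.span k {a, b} :=
        mul_le_mul_left (h.span_mul_cdvEven_le hgen) _
    _ = (cdvEven k a b c).toSubmodule * (Submodule.span k {a, b} * Submodule.span k {a, b}) :=
        mul_assoc _ _ _
    _ ≤ (cdvEven k a b c).toSubmodule * (cdvEven k a b c).toSubmodule :=
        mul_le_mul_right (h.span_mul_span_le two_isUnit) _
    _ = (cdvEven k a b c).toSubmodule := (Subalgebra.isIdempotentElem_toSubmodule _).eq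

theorem cdvEven_sup_cdvOdd_eq_top (h : IsCdvTriple a b c) (two_isUnit : IsUnit (2 : k))
    (hgen : Algebra.adjoin k {a, b, c} = ⊤) :
    (cdvEven k a b c).toSubmodule ⊔ cdvOdd k a b c = ⊤ := by
  have span_mul_le : Submodule.span k {a, b} * ((cdvEven k a b c).toSubmodule ⊔ cdvOdd k a b c) ≤
      (cdvEven k a b c).toSubmodule ⊔ cdvOdd k a b c := by
    rw [Submodule.mul_sup, sup_comm]
    exact sup_le_sup (h.span_mul_cdvOdd_le two_isUnit hgen) (h.span_mul_cdvEven_le hgen)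
  have even_mul_le : (cdvEven k a b c).toSubmodule *
      ((cdvEven k a b c).toSubmodule ⊔ cdvOdd k a b c) ≤
      (cdvEven k a b c).toSubmodule ⊔ cdvOdd k a b c := by
    rw [Submodule.mul_sup, (Subalgebra.isIdempotentElem_toSubmodule _).eq]
    exact sup_le_sup_left cdvEven_mul_cdvOdd_le _
  refine submodule_eq_top_of_forall_mul_mem hgen
    (Submodule.mem_sup_left (one_mem (cdvEven k a b c))) ?_
  rintro _ (rfl | rfl | rfl) m hm
  · exact span_mul_le (Submodule.mul_mem_mul (Submodule.subset_span (by simp)) hm)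
  · exact span_mul_le (Submodule.mul_mem_mul (Submodule.subset_span (by simp)) hm)
  · exact even_mul_le (Submodule.mul_mem_mul c_mem_cdvEven hm)

theorem commute_c_of_mem_cdvEven (h : IsCdvTriple a b c) {p : R} (hp : p ∈ cdvEven k a b c) :
    Commute c p := by
  have c_a_sq := commute_sq_of_semiconjBy_neg (semiconjBy_neg_symm h.semiconj_ac)
  have c_b_sq := commute_sq_of_semiconjBy_neg (semiconjBy_neg_symm h.semiconj_bc)
  have even_le : cdvEven k a b c ≤ Subalgebra.centralizer k {c} := by
    refine Algebra.adjoin_le ?_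
    rintro _ (rfl | rfl | rfl | rfl) <;>
      simp only [SetLike.mem_coe, Subalgebra.mem_centralizer_iff, Set.mem_singleton_iff, forall_eq]
    exacts [c_a_sq, c_b_sq, h.commute_c_mul_add_mul]
  exact (Subalgebra.mem_centralizer_iff k).mp (even_le hp) c rfl

theorem semiconjBy_neg_of_mem_cdvOdd (h : IsCdvTriple a b c) {o : R} (ho : o ∈ cdvOdd k a b c) :
    SemiconjBy c o (-o) := by
  induction ho using Submodule.mul_induction_on' with
  | mem_mul_mem p hp v hv =>
    simpa using SemiconjBy.mul_right (h.commute_c_of_mem_cdvEven hp)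
      (semiconjBy_neg_symm (h.semiconjBy_neg_of_mem_span hv))
  | add x _ y _ hx hy => simpa [add_comm] using hx.add_right hy

theorem center_eq_cdvCentral (h : IsCdvTriple a b c) (two_isUnit : IsUnit (2 : k))
    (hgen : Algebra.adjoin k {a, b, c} = ⊤) (ha : IsLeftRegular a) (hc : IsLeftRegular c) :
    Subalgebra.center k R = cdvCentral k a b c := by
  refine le_antisymm (fun u hu ↦ ?_) (h.cdvCentral_le_center hgen)
  have central (x : R) : Commute x u := Subalgebra.mem_center_iff.mp hu x
  have two_regular : IsLeftRegular (2 : R) :=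
    (map_ofNat (algebraMap k R) 2 ▸ two_isUnit.map (algebraMap k R)).isRegular.left
  obtain ⟨p, hp, o, ho, rfl⟩ :=
    Submodule.mem_sup.mp (h.cdvEven_sup_cdvOdd_eq_top two_isUnit hgen ▸ Submodule.mem_top (x := u))
  have odd_eq_zero : o = 0 :=
    eq_zero_of_commute_of_semiconjBy_neg two_regular hc
      (by simpa using (central c).sub_right (h.commute_c_of_mem_cdvEven hp))
      (h.semiconjBy_neg_of_mem_cdvOdd ho)
  obtain ⟨z, hz, w, hw, rfl⟩ := h.exists_central_of_mem_cdvEven hgen hp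
  have comm {z : R} (hz : z ∈ cdvCentral k a b c) : Commute a z :=
    Subalgebra.mem_center_iff.mp (h.cdvCentral_le_center hgen hz) a
  have mul_c_eq_zero : w * c = 0 :=
    eq_zero_of_commute_of_semiconjBy_neg two_regular ha
      (by simpa [odd_eq_zero] using (central a).sub_right (comm hz))
      (by simpa using SemiconjBy.mul_right (comm hw) h.semiconj_ac)
  simpa [odd_eq_zero, mul_c_eq_zero] using hz

theorem span_range_cdvMonomial (h : IsCdvTriple a b c) (hgen : Algebra.adjoin k {a, b, c} = ⊤) :
    Submodule.span k (Set.range (cdvMonomial a b c)) = ⊤ := by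
  set M := Submodule.span k (Set.range (cdvMonomial a b c))
  have mem (l i j : ℕ) : c ^ l * (b ^ i * a ^ j) ∈ M := Submodule.subset_span ⟨(l, i, j), rfl⟩
  have neg_pow_mul_mem (l : ℕ) {x : R} (hx : c ^ l * x ∈ M) : (-c) ^ l * x ∈ M := by
    rcases neg_one_pow_eq_or R l with sign | sign <;> simpa [neg_pow c, sign] using hx
  have mul_mem {x : R} (hx : ∀ l i j, x * (c ^ l * (b ^ i * a ^ j)) ∈ M) : ∀ m ∈ M, x * m ∈ M :=
    fun m hm ↦ by
      induction hm using Submodule.span_induction with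
      | mem m hm => obtain ⟨⟨l, i, j⟩, rfl⟩ := hm; exact hx l i j
      | zero => simp
      | add m n _ _ hm hn => rw [mul_add]; exact add_mem hm hn
      | smul r m _ hm => rw [mul_smul_comm]; exact M.smul_mem r hm
  refine submodule_eq_top_of_forall_mul_mem hgen (by simpa using mem 0 0 0) ?_
  simp only [Set.mem_insert_iff, Set.mem_singleton_iff, forall_eq_or_imp, forall_eq]
  refine ⟨mul_mem fun l i j ↦ ?_, mul_mem fun l i j ↦ ?_, mul_mem fun l i j ↦ ?_⟩
  · rw [← mul_assoc, (h.semiconj_ac.pow_right l).eq, mul_assoc]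
    refine neg_pow_mul_mem l ?_
    cases i with
    | zero => simpa [← pow_succ'] using mem l 0 (j + 1)
    | succ i =>
      rw [← mul_assoc a, h.mul_pow_succ, add_mul, mul_add, smul_mul_assoc, mul_smul_comm,
        mul_assoc (b ^ _), ← pow_succ', mul_assoc (c ^ 3), ← mul_assoc (c ^ l) (c ^ 3), ← pow_add]
      exact add_mem (mem l (i + 1) (j + 1)) (zsmul_mem (mem (l + 3) i j) _)
  · rw [← mul_assoc, (h.semiconj_bc.pow_right l).eq, mul_assoc, ← mul_assoc b, ← pow_succ']
    exact neg_pow_mul_mem l (mem l (i + 1) j)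
  · rw [← mul_assoc, ← pow_succ']
    exact mem (l + 1) i j

end Center

end IsCdvTriple

section Model

variable (k : Type*) [CommRing k]

/-- Left multiplication by `a` in the basis of ordered monomials `cˡ bⁱ aʲ`. The truncated
exponent `i - 1` at `i = 0` is harmless because its coefficient `1 - (-1) ^ i` vanishes. -/
noncomputable def cdvOpA : Module.End k (ℕ × ℕ × ℕ →₀ k) :=
  Finsupp.linearCombination k fun p ↦ (-1 : k) ^ p.1 •
    (Finsupp.single (p.1, p.2.1, p.2.2 + 1) 1 +
      (1 - (-1) ^ p.2.1) • Finsupp.single (p.1 + 3, p.2.1 - 1, p.2.2) 1)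

/-- Left multiplication by `b` in the basis of ordered monomials `cˡ bⁱ aʲ`. -/
noncomputable def cdvOpB : Module.End k (ℕ × ℕ × ℕ →₀ k) :=
  Finsupp.linearCombination k fun p ↦ (-1 : k) ^ p.1 •
    Finsupp.single (p.1, p.2.1 + 1, p.2.2) 1

/-- Left multiplication by `c` in the basis of ordered monomials `cˡ bⁱ aʲ`. -/
noncomputable def cdvOpC : Module.End k (ℕ × ℕ × ℕ →₀ k) :=
  Finsupp.linearCombination k fun p ↦ Finsupp.single (p.1 + 1, p.2.1, p.2.2) 1

variable {k}

theorem cdvOpA_single_zero (l j : ℕ) :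
    cdvOpA k (Finsupp.single (l, 0, j) 1) = (-1 : k) ^ l • Finsupp.single (l, 0, j + 1) 1 := by
  simp [cdvOpA]

theorem cdvOpA_single_succ (l i j : ℕ) :
    cdvOpA k (Finsupp.single (l, i + 1, j) 1) =
      (-1 : k) ^ l • (Finsupp.single (l, i + 1, j + 1) 1 +
        (1 + (-1 : k) ^ i) • Finsupp.single (l + 3, i, j) 1) := by
  simp [cdvOpA, pow_succ]

theorem cdvOpB_single (l i j : ℕ) :
    cdvOpB k (Finsupp.single (l, i, j) 1) = (-1 : k) ^ l • Finsupp.single (l, i + 1, j) 1 := by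
  simp [cdvOpB]

theorem cdvOpC_single (l i j : ℕ) :
    cdvOpC k (Finsupp.single (l, i, j) 1) = Finsupp.single (l + 1, i, j) 1 := by
  simp [cdvOpC]

theorem cdvOpC_pow_single (n l i j : ℕ) :
    (cdvOpC k ^ n) (Finsupp.single (l, i, j) 1) = Finsupp.single (l + n, i, j) 1 := by
  induction n with
  | zero => simp
  | succ n ih => rw [pow_succ', Module.End.mul_apply, ih, cdvOpC_single, add_assoc]

theorem cdvMonomial_cdvOp_apply (p : ℕ × ℕ × ℕ) :
    cdvMonomial (cdvOpA k) (cdvOpB k) (cdvOpC k) p (Finsupp.single (0, 0, 0) 1) =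
      Finsupp.single p 1 := by
  obtain ⟨l, i, j⟩ := p
  have opA_pow : (cdvOpA k ^ j) (Finsupp.single (0, 0, 0) 1) = Finsupp.single (0, 0, j) 1 := by
    induction j with
    | zero => rfl
    | succ j ih => rw [pow_succ', Module.End.mul_apply, ih, cdvOpA_single_zero, pow_zero, one_smul]
  have opB_pow : (cdvOpB k ^ i) (Finsupp.single (0, 0, j) 1) = Finsupp.single (0, i, j) 1 := by
    induction i with
    | zero => rfl
    | succ i ih => rw [pow_succ', Module.End.mul_apply, ih, cdvOpB_single, pow_zero, one_smul]
  rw [cdvMonomial, Module.End.mul_apply, Module.End.mul_apply, opA_pow, opB_pow,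
    cdvOpC_pow_single, zero_add]

theorem isCdvTriple_cdvOp : IsCdvTriple (cdvOpA k) (cdvOpB k) (cdvOpC k) where
  semiconj_ac := by
    refine semiconjBy_neg_iff.mpr <| Finsupp.basisSingleOne.ext fun ⟨l, i, j⟩ ↦ ?_
    rw [Finsupp.coe_basisSingleOne, LinearMap.add_apply, LinearMap.zero_apply]
    cases i <;> simp only [Module.End.mul_apply, cdvOpA_single_zero, cdvOpA_single_succ,
      cdvOpC_single, map_smul, map_add, add_right_comm l 3 1]
    all_goals module
  semiconj_bc := by
    refine semiconjBy_neg_iff.mpr <| Finsupp.basisSingleOne.ext fun ⟨l, i, j⟩ ↦ ?_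
    rw [Finsupp.coe_basisSingleOne, LinearMap.add_apply, LinearMap.zero_apply]
    simp only [Module.End.mul_apply, cdvOpB_single, cdvOpC_single, map_smul]
    module
  mul_ab := by
    refine Finsupp.basisSingleOne.ext fun ⟨l, i, j⟩ ↦ ?_
    rw [Finsupp.coe_basisSingleOne, two_mul]
    simp only [LinearMap.add_apply, Module.End.mul_apply, cdvOpB_single, cdvOpC_pow_single]
    rcases neg_one_pow_eq_or k l with sign | sign <;> cases i <;>
      simp only [cdvOpA_single_zero, cdvOpA_single_succ, cdvOpB_single, map_smul, map_add,
        pow_succ, pow_zero, sign]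
    all_goals module

end Model

section CdvAlgebra

variable (k : Type*) [Field k]

theorem isCdvTriple_cdvGen : IsCdvTriple (cdvGen k 0) (cdvGen k 1) (cdvGen k 2) where
  semiconj_ac := by
    have := RingQuot.mkAlgHom_rel k (CdvRel.ac (k := k))
    rw [map_add, map_mul, map_mul, map_zero] at this
    exact semiconjBy_neg_iff.mpr this
  semiconj_bc := by
    have := RingQuot.mkAlgHom_rel k (CdvRel.bc (k := k))
    rw [map_add, map_mul, map_mul, map_zero] at this
    exact semiconjBy_neg_iff.mpr this
  mul_ab := by
    have := RingQuot.mkAlgHom_rel k (CdvRel.ab (k := k))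
    rw [map_sub, map_sub, map_mul, map_mul, map_mul, map_pow, map_ofNat, map_zero] at this
    exact sub_eq_iff_eq_add'.mp (sub_eq_zero.mp this)

theorem adjoin_cdvGen : Algebra.adjoin k {cdvGen k 0, cdvGen k 1, cdvGen k 2} = ⊤ := by
  have range_eq : Set.range (FreeAlgebra.ι k : Fin 3 → FreeAlgebra k (Fin 3)) =
      {FreeAlgebra.ι k 0, FreeAlgebra.ι k 1, FreeAlgebra.ι k 2} := by
    ext; simp [Fin.exists_fin_succ, eq_comm]
  have map_eq_top : (⊤ : Subalgebra k (FreeAlgebra k (Fin 3))).map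
      (RingQuot.mkAlgHom k (CdvRel k)) = ⊤ := by
    rw [Algebra.map_top, AlgHom.range_eq_top]
    exact RingQuot.mkAlgHom_surjective k (CdvRel k)
  rwa [← FreeAlgebra.adjoin_range_ι, range_eq, AlgHom.map_adjoin, Set.image_insert_eq,
    Set.image_pair] at map_eq_top

variable {k}

/-- The algebra homomorphism out of `CdvAlgebra k` sending the generators to a given triple. -/
noncomputable def IsCdvTriple.lift {R : Type*} [Ring R] [Algebra k R] {a b c : R}
    (h : IsCdvTriple a b c) : CdvAlgebra k →ₐ[k] R :=
  RingQuot.liftAlgHom k ⟨FreeAlgebra.lift k ![a, b, c], fun _ _ rel ↦ by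
    cases rel with
    | ac => simpa using semiconjBy_neg_iff.mp h.semiconj_ac
    | bc => simpa using semiconjBy_neg_iff.mp h.semiconj_bc
    | ab => simp [h.mul_ab, map_ofNat (FreeAlgebra.lift k ![a, b, c]) 2]⟩

theorem IsCdvTriple.lift_cdvGen {R : Type*} [Ring R] [Algebra k R] {a b c : R}
    (h : IsCdvTriple a b c) (i : Fin 3) : h.lift (cdvGen k i) = ![a, b, c] i := by
  simp [lift, cdvGen]

theorem linearIndependent_cdvMonomial :
    LinearIndependent k (cdvMonomial (cdvGen k 0) (cdvGen k 1) (cdvGen k 2)) := by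
  refine LinearIndependent.of_comp (LinearMap.applyₗ (Finsupp.single (0, 0, 0) (1 : k)) ∘ₗ
    (isCdvTriple_cdvOp (k := k)).lift.toLinearMap) ?_
  convert Finsupp.linearIndependent_single_one k (ℕ × ℕ × ℕ) using 1
  ext1 p
  simpa [cdvMonomial, IsCdvTriple.lift_cdvGen] using cdvMonomial_cdvOp_apply p

variable (k)

/-- The Poincaré–Birkhoff–Witt basis of `CdvAlgebra k`, consisting of the ordered monomials. -/
noncomputable def cdvBasis : Module.Basis (ℕ × ℕ × ℕ) k (CdvAlgebra k) :=
  Module.Basis.mk linearIndependent_cdvMonomial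
    ((isCdvTriple_cdvGen k).span_range_cdvMonomial (adjoin_cdvGen k)).ge

theorem isLeftRegular_cdvGen_two : IsLeftRegular (cdvGen k 2) := by
  refine isLeftRegular_of_mul_basis (cdvBasis k) (f := fun p ↦ (p.1 + 1, p.2)) ?_ fun p ↦ ?_
  · rintro ⟨l, p⟩ ⟨l', p'⟩ h
    simpa using h
  · simp only [cdvBasis, Module.Basis.mk_apply, cdvMonomial]
    rw [← mul_assoc, ← pow_succ']

theorem isLeftRegular_cdvGen_zero : IsLeftRegular (cdvGen k 0) := by
  refine (IsLeftRegular.pow_iff two_pos).mp <|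
    isLeftRegular_of_mul_basis (cdvBasis k) (f := fun p ↦ (p.1, p.2.1, p.2.2 + 2)) ?_ fun p ↦ ?_
  · rintro ⟨l, i, j⟩ ⟨l', i', j'⟩ h
    simpa using h
  · have h := isCdvTriple_cdvGen k
    have comm_c : Commute (cdvGen k 0 ^ 2) (cdvGen k 2 ^ p.1) :=
      (commute_sq_of_semiconjBy_neg (semiconjBy_neg_symm h.semiconj_ac)).symm.pow_right p.1
    have comm_b : Commute (cdvGen k 0 ^ 2) (cdvGen k 1 ^ p.2.1) :=
      h.swap.commute_a_b_sq.symm.pow_right p.2.1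
    simp only [cdvBasis, Module.Basis.mk_apply, cdvMonomial]
    rw [comm_c.left_comm, comm_b.left_comm, ← pow_add, add_comm]

end CdvAlgebra

theorem cdv_center_eq_adjoin_general (k : Type*) [Field k] [NeZero (2 : k)] :
    Subalgebra.center k (CdvAlgebra k)
      = Algebra.adjoin k
          {cdvGen k 0 ^ 2, cdvGen k 1 ^ 2,
            cdvGen k 0 * cdvGen k 1 + cdvGen k 1 * cdvGen k 0,
            cdvGen k 2 ^ 2} :=
  (isCdvTriple_cdvGen k).center_eq_cdvCentral (NeZero.ne (2 : k)).isUnit (adjoin_cdvGen k)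
    (isLeftRegular_cdvGen_zero k) (isLeftRegular_cdvGen_two k)

/-- The center of `A` is the `k`-subalgebra generated by `a²`, `b²`, `ab + ba`
and `c²`. -/
theorem cdv_center_eq_adjoin (k : Type*) [Field k] [CharZero k] :
    Subalgebra.center k (CdvAlgebra k)
      = Algebra.adjoin k
          {cdvGen k 0 ^ 2, cdvGen k 1 ^ 2,
            cdvGen k 0 * cdvGen k 1 + cdvGen k 1 * cdvGen k 0,
            cdvGen k 2 ^ 2} :=
  cdv_center_eq_adjoin_general k
end

section
/- There is an isomorphism of k-algebras from k[x,y,z,t]/(z² − 4xy − 4t³) onto the center of A, sending x ↦ a², y ↦ b², z ↦ ab + ba, t ↦ c²; in particular the center of A is the coordinate ring of the compound Du Val hypersurface singularity z² − 4xy = 4t³. -/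
/-!
Since `a` and `b` anticommute with `c`, the elements `x = a²` and `y = b²` are central, and the
relations rewrite every element of `A` as `f₀(c) + f₁(c) a + f₂(c) b + f₃(c) ab` with `fᵢ`
polynomials over `k[x, y]`. Left multiplication on these expressions gives operators on
`k[x, y][c]⁴` that themselves satisfy the relations, so the expression is unique. Commuting with
`c` forces `f₁ = f₂ = 0`, and then commuting with `a` forces `f₃` and `f₀ + c³ f₃` to be even in
`c`. As `ab = (ab + ba) / 2 + c³`, the element is `p(c²) + q(c²) (ab + ba)`, which is also the
shape of an element of the hypersurface ring after reducing modulo `z² = 4xy + 4t³`.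
-/

section Preliminaries

open Polynomial

theorem semiconjBy_aeval {R A : Type*} [CommSemiring R] [Semiring A] [Algebra R A] {a c d : A}
    (h : SemiconjBy a c d) (p : R[X]) : SemiconjBy a (aeval c p) (aeval d p) := by
  induction p using Polynomial.induction_on' with
  | add p q hp hq => simpa only [map_add] using hp.add_right hq
  | monomial n r =>
    simpa only [aeval_monomial] using
      SemiconjBy.mul_right (Algebra.commute_algebraMap_right r a) (h.pow_right n)

theorem eq_zero_of_neg_eq_self {R : Type*} [Ring R] (h2 : IsLeftRegular (2 : R)) {r : R}
    (hr : -r = r) : r = 0 :=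
  h2 (by simpa [two_mul] using neg_eq_iff_add_eq_zero.mp hr)

theorem isLeftRegular_C {R : Type*} [Semiring R] {r : R} (hr : IsLeftRegular r) :
    IsLeftRegular (C r) := fun p q hpq =>
  Polynomial.ext fun n => hr (by simpa only [coeff_C_mul] using congrArg (coeff · n) hpq)

theorem expand_two_contract_of_comp_neg_X_eq {R : Type*} [CommRing R]
    (h2 : IsLeftRegular (2 : R)) {p : R[X]} (hp : p.comp (-X) = p) :
    expand R 2 (contract 2 p) = p := by
  ext n
  rw [coeff_expand two_pos, coeff_contract two_ne_zero]
  split_ifs with hn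
  · rw [Nat.div_mul_cancel hn]
  · have hodd : Odd n := Nat.not_even_iff_odd.mp fun he => hn he.two_dvd
    have hcoeff : p.coeff n * (-1) ^ n = p.coeff n := by
      rw [← comp_C_mul_X_coeff, C_neg, C_1, neg_one_mul, hp]
    exact (eq_zero_of_neg_eq_self h2 (by simpa [hodd.neg_one_pow] using hcoeff)).symm

theorem comp_neg_X_eq_of_comp_neg_X_eq_add {R : Type*} [CommRing R]
    (h2 : IsLeftRegular (2 : R)) {p q : R[X]} (hpq : p.comp (-X) = p + q * (2 * X ^ 3)) :
    q.comp (-X) = q ∧ (p + q * X ^ 3).comp (-X) = p + q * X ^ 3 := by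
  have hreg : IsLeftRegular (2 * X ^ 3 : R[X]) :=
    (map_ofNat (C (R := R)) 2 ▸ isLeftRegular_C h2).mul (monic_X_pow 3).isRegular.left
  have hflip : p = p + q * (2 * X ^ 3) - q.comp (-X) * (2 * X ^ 3) := by
    calc p = (p + q * (2 * X ^ 3)).comp (-X) := by rw [← hpq, comp_neg_X_comp_neg_X]
      _ = p + q * (2 * X ^ 3) - q.comp (-X) * (2 * X ^ 3) := by
        rw [add_comp, hpq, mul_comp, mul_comp, pow_comp, X_comp, ofNat_comp]
        ring
  have hq : q.comp (-X) = q := hreg (by linear_combination hflip)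
  refine ⟨hq, ?_⟩
  rw [add_comp, mul_comp, pow_comp, X_comp, hpq, hq]
  ring

theorem mem_center_of_adjoin_eq_top {R A : Type*} [CommSemiring R] [Semiring A] [Algebra R A]
    {s : Set A} (hs : Algebra.adjoin R s = ⊤) {z : A} (hz : ∀ g ∈ s, Commute g z) :
    z ∈ Subalgebra.center R A := by
  have hle : Algebra.adjoin R s ≤ Subalgebra.centralizer R {z} :=
    Algebra.adjoin_le fun g hg => Subalgebra.mem_centralizer_iff R |>.mpr fun _ hw =>
      Set.mem_singleton_iff.mp hw ▸ (hz g hg).eq.symm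
  rw [hs] at hle
  exact Subalgebra.mem_center_iff.mpr fun m =>
    (Subalgebra.mem_centralizer_iff R |>.mp (hle Algebra.mem_top) z rfl).symm

theorem adjoin_eq_top_of_isScalarTower {R : Type*} (S : Type*) {A : Type*} [CommSemiring R]
    [CommSemiring S] [Semiring A] [Algebra R S] [Algebra R A] [Algebra S A] [IsScalarTower R S A]
    {s : Set A} (hs : Algebra.adjoin R s = ⊤) : Algebra.adjoin S s = ⊤ := by
  have hle : Algebra.adjoin R s ≤ (Algebra.adjoin S s).restrictScalars R :=
    Algebra.adjoin_le Algebra.subset_adjoin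
  exact eq_top_iff.mpr fun m _ => hle (hs ▸ Algebra.mem_top)

end Preliminaries

/-- A triple `(a, b, c)` satisfying the defining relations of the algebra `A`, in any ring. -/
structure CdvTriple {A : Type*} [Ring A] (a b c : A) : Prop where
  ac : a * c + c * a = 0
  bc : b * c + c * b = 0
  ab : a * b - b * a - 2 * c ^ 3 = 0

namespace CdvTriple

open Polynomial

section Relations

variable {A : Type*} [Ring A] {a b c : A} (h : CdvTriple a b c)
include h

theorem swap : CdvTriple b a (-c) where
  ac := by rw [mul_neg, neg_mul, ← neg_add, h.bc, neg_zero]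
  bc := by rw [mul_neg, neg_mul, ← neg_add, h.ac, neg_zero]
  ab := by
    calc b * a - a * b - 2 * (-c) ^ 3 = -(a * b - b * a - 2 * c ^ 3) := by noncomm_ring
      _ = 0 := by rw [h.ab, neg_zero]

theorem semiconjBy_a : SemiconjBy a c (-c) := by
  rw [SemiconjBy, neg_mul]
  exact eq_neg_of_add_eq_zero_left h.ac

theorem semiconjBy_b : SemiconjBy b c (-c) := by
  rw [SemiconjBy, neg_mul]
  exact eq_neg_of_add_eq_zero_left h.bc

theorem commutator_eq : a * b - b * a = 2 * c ^ 3 := sub_eq_zero.mp h.ab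

theorem b_mul_a : b * a = a * b - 2 * c ^ 3 := by rw [← h.commutator_eq, sub_sub_cancel]

theorem a_mul_c_cube : a * c ^ 3 = -(c ^ 3 * a) := by
  rw [(h.semiconjBy_a.pow_right 3).eq, Odd.neg_pow (by decide), neg_mul]

theorem commute_a_c_sq : Commute a (c ^ 2) :=
  neg_sq c ▸ h.semiconjBy_a.pow_right 2

theorem commute_b_c_sq : Commute b (c ^ 2) :=
  neg_sq c ▸ h.semiconjBy_b.pow_right 2

theorem commute_a_sq_b : Commute (a ^ 2) b := by
  refine sub_eq_zero.mp ?_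
  calc a ^ 2 * b - b * a ^ 2 = a * (a * b - b * a) + (a * b - b * a) * a := by noncomm_ring
    _ = 2 * (a * c ^ 3 + c ^ 3 * a) := by rw [h.commutator_eq]; noncomm_ring
    _ = 0 := by rw [h.a_mul_c_cube, neg_add_cancel, mul_zero]

theorem commute_a_sq_c : Commute (a ^ 2) c := by
  have hac := h.semiconjBy_a.neg_right.mul_left h.semiconjBy_a
  rwa [neg_neg, ← sq] at hac

theorem commute_b_sq_c : Commute (b ^ 2) c := by
  simpa only [Commute.neg_right_iff] using h.swap.commute_a_sq_c

theorem commute_b_sq_a : Commute (b ^ 2) a := h.swap.commute_a_sq_b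

theorem commute_a_anticommutator : Commute a (a * b + b * a) := by
  refine sub_eq_zero.mp ?_
  calc a * (a * b + b * a) - (a * b + b * a) * a = a ^ 2 * b - b * a ^ 2 := by noncomm_ring
    _ = 0 := sub_eq_zero.mpr h.commute_a_sq_b

theorem commute_b_anticommutator : Commute b (a * b + b * a) := by
  rw [add_comm]
  exact h.swap.commute_a_anticommutator

theorem commute_c_anticommutator : Commute c (a * b + b * a) := by
  have hneg {g : A} (hg : SemiconjBy g c (-c)) : SemiconjBy g (-c) c := by
    simpa only [neg_neg] using hg.neg_right
  exact (((hneg h.semiconjBy_a).mul_left h.semiconjBy_b).add_left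
    ((hneg h.semiconjBy_b).mul_left h.semiconjBy_a) : Commute _ c).symm

theorem anticommutator_sq :
    (a * b + b * a) ^ 2 - 4 * a ^ 2 * b ^ 2 - 4 * (c ^ 2) ^ 3 = 0 := by
  have hab : a * b ^ 2 * a = a ^ 2 * b ^ 2 := by
    rw [mul_assoc, h.commute_b_sq_a.eq, ← mul_assoc, ← sq]
  have hba : b * a ^ 2 * b = a ^ 2 * b ^ 2 := by
    rw [← h.commute_a_sq_b.eq, mul_assoc, ← sq]
  have hsq : (a * b + b * a) ^ 2 = 4 * a ^ 2 * b ^ 2 + 4 * (c ^ 2) ^ 3 :=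
    calc (a * b + b * a) ^ 2
        = (a * b - b * a) ^ 2 + 2 * (a * b ^ 2 * a + b * a ^ 2 * b) := by noncomm_ring
      _ = (2 * c ^ 3) ^ 2 + 2 * (a ^ 2 * b ^ 2 + a ^ 2 * b ^ 2) := by
        rw [h.commutator_eq, hab, hba]
      _ = 4 * a ^ 2 * b ^ 2 + 4 * (c ^ 2) ^ 3 := by noncomm_ring
  rw [hsq]; abel

end Relations

section Generated

variable {R A : Type*} [CommSemiring R] [Ring A] [Algebra R A] {a b c : A}

theorem mem_center {z : A} (hgen : Algebra.adjoin R {a, b, c} = ⊤) (ha : Commute a z)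
    (hb : Commute b z) (hc : Commute c z) : z ∈ Subalgebra.center R A :=
  mem_center_of_adjoin_eq_top hgen <| by rintro g (rfl | rfl | rfl) <;> assumption

variable (h : CdvTriple a b c) (hgen : Algebra.adjoin R {a, b, c} = ⊤)
include h hgen

theorem a_sq_mem_center : a ^ 2 ∈ Subalgebra.center R A :=
  mem_center hgen (Commute.self_pow a 2) h.commute_a_sq_b.symm h.commute_a_sq_c.symm

theorem b_sq_mem_center : b ^ 2 ∈ Subalgebra.center R A :=
  mem_center hgen h.commute_b_sq_a.symm (Commute.self_pow b 2) h.commute_b_sq_c.symm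

theorem c_sq_mem_center : c ^ 2 ∈ Subalgebra.center R A :=
  mem_center hgen h.commute_a_c_sq h.commute_b_c_sq (Commute.self_pow c 2)

theorem anticommutator_mem_center : a * b + b * a ∈ Subalgebra.center R A :=
  mem_center hgen h.commute_a_anticommutator h.commute_b_anticommutator
    h.commute_c_anticommutator

end Generated

/-- The normal form map of the algebra `A`: it sends coefficients `f₀, …, f₃` to
`f₀(c) + f₁(c) a + f₂(c) b + f₃(c) ab`. When `Q` is generated by the central elements `a²` and `b²`,
this expresses `A` as a free left module over `Q[c]`. -/
noncomputable def normalForm {Q A : Type*} [CommRing Q] [Ring A] [Algebra Q A] (a b c : A) :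
    (Fin 4 → Q[X]) →ₗ[Q] A where
  toFun f := aeval c (f 0) + aeval c (f 1) * a + aeval c (f 2) * b + aeval c (f 3) * (a * b)
  map_add' f g := by simp only [Pi.add_apply, map_add, add_mul]; abel
  map_smul' r f := by
    simp only [Pi.smul_apply, map_smul, smul_add, smul_mul_assoc, RingHom.id_apply]

theorem normalForm_apply {Q A : Type*} [CommRing Q] [Ring A] [Algebra Q A] (a b c : A)
    (f : Fin 4 → Q[X]) : normalForm a b c f =
      aeval c (f 0) + aeval c (f 1) * a + aeval c (f 2) * b + aeval c (f 3) * (a * b) := rfl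

section LeftMul

variable {Q : Type*} [CommRing Q]

/-- Left multiplication by `a` in normal form, where `x` stands for `a²`. The substitution `-X`
comes from moving `a` past `c`. -/
noncomputable def leftMulA (x : Q) : Module.End Q (Fin 4 → Q[X]) where
  toFun f := ![x • (f 1).comp (-X), (f 0).comp (-X), x • (f 3).comp (-X), (f 2).comp (-X)]
  map_add' f g := by ext1 i; fin_cases i <;> simp
  map_smul' r f := by ext1 i; fin_cases i <;> simp [smul_comm x r]

/-- Left multiplication by `b` in normal form, where `y` stands for `b²`. The substitution `-X`
comes from moving `b` past `c`, and the terms `2 * X ^ 3` from `ba = ab - 2c³`. -/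
noncomputable def leftMulB (y : Q) : Module.End Q (Fin 4 → Q[X]) where
  toFun f := ![y • (f 2).comp (-X) - (f 1).comp (-X) * (2 * X ^ 3), y • (f 3).comp (-X),
    (f 0).comp (-X) - (f 3).comp (-X) * (2 * X ^ 3), (f 1).comp (-X)]
  map_add' f g := by ext1 i; fin_cases i <;> simp [add_mul, add_sub_add_comm]
  map_smul' r f := by ext1 i; fin_cases i <;> simp [smul_comm y r, smul_sub]

/-- Left multiplication by `c` in normal form. -/
noncomputable def leftMulC : Module.End Q (Fin 4 → Q[X]) :=
  Algebra.lsmul Q Q (Fin 4 → Q[X]) (X : Q[X])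

theorem leftMulA_apply (x : Q) (f : Fin 4 → Q[X]) : leftMulA x f =
    ![x • (f 1).comp (-X), (f 0).comp (-X), x • (f 3).comp (-X), (f 2).comp (-X)] := rfl

theorem leftMulB_apply (y : Q) (f : Fin 4 → Q[X]) : leftMulB y f =
    ![y • (f 2).comp (-X) - (f 1).comp (-X) * (2 * X ^ 3), y • (f 3).comp (-X),
      (f 0).comp (-X) - (f 3).comp (-X) * (2 * X ^ 3), (f 1).comp (-X)] := rfl

theorem leftMulC_apply (f : Fin 4 → Q[X]) : leftMulC f = (X : Q[X]) • f := rfl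

theorem aeval_leftMulC_apply (p : Q[X]) (f : Fin 4 → Q[X]) :
    aeval (leftMulC (Q := Q)) p f = p • f := by
  rw [leftMulC, aeval_algHom_apply, aeval_X_left_apply, Algebra.lsmul_apply]

theorem leftMulA_sq (x : Q) : leftMulA x ^ 2 = algebraMap Q _ x := by
  refine LinearMap.ext fun f => funext fun i => ?_
  fin_cases i <;> simp [sq, leftMulA_apply, comp_neg_X_comp_neg_X]

theorem leftMulB_sq (y : Q) : leftMulB y ^ 2 = algebraMap Q _ y := by
  refine LinearMap.ext fun f => funext fun i => ?_
  fin_cases i <;>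
    simp [sq, leftMulB_apply, comp_neg_X_comp_neg_X, Odd.neg_pow (show Odd 3 by decide)]

theorem leftMul (x y : Q) : CdvTriple (leftMulA x) (leftMulB y) leftMulC where
  ac := LinearMap.ext fun f => funext fun i => by
    fin_cases i <;> simp [leftMulA_apply, leftMulC_apply]
  bc := LinearMap.ext fun f => funext fun i => by
    fin_cases i <;>
      simp only [leftMulB_apply, leftMulC_apply, LinearMap.add_apply, LinearMap.zero_apply,
        Module.End.mul_apply, Pi.add_apply, Pi.smul_apply, Pi.zero_apply, Fin.zero_eta, Fin.mk_one,
        Fin.reduceFinMk, Matrix.cons_val, smul_eq_mul, mul_comp, X_comp, smul_eq_C_mul] <;>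
      ring
  ab := LinearMap.ext fun f => funext fun i => by
    have hcube (g : Fin 4 → Q[X]) :
        (2 * leftMulC ^ 3 : Module.End Q _) g = (2 * X ^ 3 : Q[X]) • g := by
      rw [← aeval_leftMulC_apply, map_mul, map_pow, map_ofNat, aeval_X]
    fin_cases i <;>
      simp only [leftMulA_apply, leftMulB_apply, hcube, LinearMap.sub_apply, LinearMap.zero_apply,
        Module.End.mul_apply, Pi.sub_apply, Pi.smul_apply, Pi.zero_apply, Fin.zero_eta, Fin.mk_one,
        Fin.reduceFinMk, Matrix.cons_val, smul_eq_mul, sub_comp, mul_comp, pow_comp, X_comp,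
        ofNat_comp, C_comp, comp_neg_X_comp_neg_X, smul_eq_C_mul] <;>
      ring

theorem normalForm_leftMul_apply (x y : Q) (f : Fin 4 → Q[X]) :
    normalForm (leftMulA x) (leftMulB y) leftMulC f ![1, 0, 0, 0] = f := by
  funext i
  fin_cases i <;> simp [normalForm_apply, aeval_leftMulC_apply, leftMulA_apply, leftMulB_apply]

end LeftMul

section OverSquares

variable {Q A : Type*} [CommRing Q] [Ring A] [Algebra Q A] {x y : Q} {a b c : A}

theorem map_normalForm {B : Type*} [Ring B] [Algebra Q B] (φ : A →ₐ[Q] B) (f : Fin 4 → Q[X]) :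
    φ (normalForm a b c f) = normalForm (φ a) (φ b) (φ c) f := by
  simp only [normalForm_apply, map_add, map_mul, aeval_algHom_apply]

theorem normalForm_injective (φ : A →ₐ[Q] Module.End Q (Fin 4 → Q[X])) (hφa : φ a = leftMulA x)
    (hφb : φ b = leftMulB y) (hφc : φ c = leftMulC) :
    Function.Injective (normalForm (Q := Q) a b c) := by
  refine Function.LeftInverse.injective (g := fun m => φ m ![1, 0, 0, 0]) fun f => ?_
  beta_reduce
  rw [map_normalForm, hφa, hφb, hφc, normalForm_leftMul_apply]

theorem mul_aeval_of_semiconjBy_neg {g : A} (hg : SemiconjBy g c (-c)) (p : Q[X]) :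
    g * aeval c p = aeval c (p.comp (-X)) * g := by
  rw [(semiconjBy_aeval hg p).eq, aeval_comp, map_neg, aeval_X]

theorem c_mul_normalForm (f : Fin 4 → Q[X]) :
    c * normalForm a b c f = normalForm a b c (leftMulC f) := by
  simp only [normalForm_apply, leftMulC_apply, mul_add, Pi.smul_apply, smul_eq_mul, map_mul,
    aeval_X, mul_assoc]

variable (h : CdvTriple a b c)
include h

theorem a_mul_normalForm (hx : a ^ 2 = algebraMap Q A x) (f : Fin 4 → Q[X]) :
    a * normalForm a b c f = normalForm a b c (leftMulA x f) := by
  have ha (p : Q[X]) (w : A) : a * (aeval c p * w) = aeval c (p.comp (-X)) * (a * w) := by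
    rw [← mul_assoc, mul_aeval_of_semiconjBy_neg h.semiconjBy_a, mul_assoc]
  have haa : a * a = x • (1 : A) := by rw [← sq, hx, Algebra.algebraMap_eq_smul_one]
  have haab : a * (a * b) = x • b := by rw [← mul_assoc, haa, smul_one_mul]
  rw [normalForm_apply, normalForm_apply, leftMulA_apply]
  simp only [mul_add, ha, mul_aeval_of_semiconjBy_neg h.semiconjBy_a, haa, haab]
  simp only [Matrix.cons_val, map_smul, smul_mul_assoc, mul_smul_comm, mul_one]
  abel

theorem b_mul_normalForm (hy : b ^ 2 = algebraMap Q A y) (f : Fin 4 → Q[X]) :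
    b * normalForm a b c f = normalForm a b c (leftMulB y f) := by
  have hb (p : Q[X]) (w : A) : b * (aeval c p * w) = aeval c (p.comp (-X)) * (b * w) := by
    rw [← mul_assoc, mul_aeval_of_semiconjBy_neg h.semiconjBy_b, mul_assoc]
  have hbb : b * b = y • (1 : A) := by rw [← sq, hy, Algebra.algebraMap_eq_smul_one]
  have hbab : b * (a * b) = y • a - 2 * c ^ 3 * b := by
    rw [← mul_assoc, h.b_mul_a, sub_mul, mul_assoc, hbb, mul_smul_one]
  rw [normalForm_apply, normalForm_apply, leftMulB_apply]
  simp only [mul_add, hb, mul_aeval_of_semiconjBy_neg h.semiconjBy_b, hbb, h.b_mul_a, hbab]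
  simp only [Matrix.cons_val, map_smul, map_sub, map_mul, map_pow, map_ofNat, aeval_X,
    smul_mul_assoc, mul_smul_comm, mul_one, mul_sub, sub_mul, mul_assoc]
  abel

theorem normalForm_mul_a (hx : a ^ 2 = algebraMap Q A x) (f : Fin 4 → Q[X]) :
    normalForm a b c f * a = normalForm a b c
      ![x • f 1 - f 2 * (2 * X ^ 3), f 0 + f 3 * (2 * X ^ 3), x • f 3, f 2] := by
  have haa : a * a = x • (1 : A) := by rw [← sq, hx, Algebra.algebraMap_eq_smul_one]
  have haba : a * b * a = x • b + 2 * c ^ 3 * a := by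
    calc a * b * a = a * a * b - 2 * (a * c ^ 3) := by
          rw [mul_assoc, h.b_mul_a]; noncomm_ring
      _ = x • b + 2 * c ^ 3 * a := by
          rw [haa, smul_one_mul, h.a_mul_c_cube, mul_neg, sub_neg_eq_add, mul_assoc]
  rw [normalForm_apply, normalForm_apply]
  simp only [add_mul, mul_assoc (aeval c _) _ a, haa, h.b_mul_a, haba]
  simp only [Matrix.cons_val, map_smul, map_add, map_sub, map_mul, map_pow, map_ofNat, aeval_X,
    smul_mul_assoc, mul_smul_comm, mul_one, mul_add, add_mul, mul_sub, mul_assoc]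
  abel

theorem normalForm_mul_c (f : Fin 4 → Q[X]) : normalForm a b c f * c =
    normalForm a b c ![X * f 0, -(X * f 1), -(X * f 2), X * f 3] := by
  have hcomm (p : Q[X]) : aeval c p * c = c * aeval c p :=
    (semiconjBy_aeval (Commute.refl c) p).eq.symm
  have hneg {g : A} (hg : g * c = -c * g) (p : Q[X]) :
      aeval c p * g * c = -(c * aeval c p * g) := by
    rw [mul_assoc, hg, neg_mul, mul_neg, ← mul_assoc, hcomm]
  have habc : a * b * c = c * (a * b) := by
    rw [mul_assoc, h.semiconjBy_b.eq, neg_mul, mul_neg, ← mul_assoc, h.semiconjBy_a.eq, neg_mul,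
      neg_mul, neg_neg, mul_assoc]
  rw [normalForm_apply, normalForm_apply]
  simp only [add_mul, hneg h.semiconjBy_a.eq, hneg h.semiconjBy_b.eq, mul_assoc (aeval c _) _ c,
    habc]
  simp only [Matrix.cons_val, map_neg, map_mul, aeval_X, neg_mul, ← mul_assoc, hcomm]

theorem normalForm_surjective (hx : a ^ 2 = algebraMap Q A x) (hy : b ^ 2 = algebraMap Q A y)
    (hgen : Algebra.adjoin Q {a, b, c} = ⊤) :
    Function.Surjective (normalForm (Q := Q) a b c) := by
  have hmul (m : A) : ∀ f : Fin 4 → Q[X], ∃ g : Fin 4 → Q[X],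
      normalForm a b c g = m * normalForm a b c f := by
    induction (hgen ▸ Algebra.mem_top : m ∈ Algebra.adjoin Q {a, b, c})
      using Algebra.adjoin_induction with
    | mem g hg =>
      rcases hg with rfl | rfl | rfl
      · exact fun f => ⟨leftMulA x f, (h.a_mul_normalForm hx f).symm⟩
      · exact fun f => ⟨leftMulB y f, (h.b_mul_normalForm hy f).symm⟩
      · exact fun f => ⟨leftMulC f, (c_mul_normalForm f).symm⟩
    | algebraMap r => exact fun f => ⟨r • f, by rw [map_smul, Algebra.smul_def]⟩
    | add m n _ _ hm hn =>
      intro f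
      obtain ⟨g, hg⟩ := hm f
      obtain ⟨g', hg'⟩ := hn f
      exact ⟨g + g', by rw [map_add, hg, hg', add_mul]⟩
    | mul m n _ _ hm hn =>
      intro f
      obtain ⟨g, hg⟩ := hn f
      obtain ⟨g', hg'⟩ := hm g
      exact ⟨g', by rw [hg', hg, mul_assoc]⟩
  intro m
  obtain ⟨g, hg⟩ := hmul m ![1, 0, 0, 0]
  exact ⟨g, by rw [hg]; simp [normalForm_apply]⟩

theorem normalForm_center (p q : Q[X]) :
    normalForm a b c ![expand Q 2 p - expand Q 2 q * (2 * X ^ 3), 0, 0, expand Q 2 q * 2] =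
      aeval (c ^ 2) p + aeval (c ^ 2) q * (a * b + b * a) := by
  rw [normalForm_apply, h.b_mul_a]
  simp only [Matrix.cons_val, map_sub, map_mul, map_pow, map_ofNat, map_zero, aeval_X,
    expand_aeval]
  noncomm_ring

theorem eq_zero_of_aeval_add_aeval_mul_anticommutator_eq_zero (h2 : IsLeftRegular (2 : Q))
    (hinj : Function.Injective (normalForm (Q := Q) a b c)) {p q : Q[X]}
    (hpq : aeval (c ^ 2) p + aeval (c ^ 2) q * (a * b + b * a) = 0) : p = 0 ∧ q = 0 := by
  rw [← h.normalForm_center, map_eq_zero_iff _ hinj] at hpq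
  have h2X : IsLeftRegular (2 : Q[X]) := map_ofNat (C (R := Q)) 2 ▸ isLeftRegular_C h2
  have hq : q = 0 := by
    have h3 : expand Q 2 q * 2 = 0 := congrFun hpq 3
    rwa [mul_comm, h2X.mul_left_eq_zero_iff, expand_eq_zero two_pos] at h3
  refine ⟨?_, hq⟩
  have h0 : expand Q 2 p - expand Q 2 q * (2 * X ^ 3) = 0 := congrFun hpq 0
  rwa [hq, map_zero, zero_mul, sub_zero, expand_eq_zero two_pos] at h0

theorem exists_eq_of_commute (h2 : IsUnit (2 : Q)) (hx : a ^ 2 = algebraMap Q A x)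
    (hν : Function.Bijective (normalForm (Q := Q) a b c)) {m : A} (ha : Commute a m)
    (hc : Commute c m) :
    ∃ p q : Q[X], m = aeval (c ^ 2) p + aeval (c ^ 2) q * (a * b + b * a) := by
  obtain ⟨f, rfl⟩ := hν.2 m
  have h2X : IsLeftRegular (2 : Q[X]) :=
    map_ofNat (C (R := Q)) 2 ▸ isLeftRegular_C h2.isRegular.left
  have heqC := hν.1 ((c_mul_normalForm f).symm.trans (hc.eq.trans (h.normalForm_mul_c f)))
  have heqA := hν.1 ((h.a_mul_normalForm hx f).symm.trans (ha.eq.trans (h.normalForm_mul_a hx f)))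
  have hzero {g : Q[X]} (hg : X * g = -(X * g)) : g = 0 :=
    (monic_X.mul_right_eq_zero_iff).mp (eq_zero_of_neg_eq_self h2X hg.symm)
  have hf1 : f 1 = 0 := hzero (congrFun heqC 1)
  have hf2 : f 2 = 0 := hzero (congrFun heqC 2)
  obtain ⟨heven3, heven0⟩ :=
    comp_neg_X_eq_of_comp_neg_X_eq_add h2.isRegular.left (congrFun heqA 1)
  obtain ⟨r, hr⟩ := h2.exists_right_inv
  have hr' : C r * 2 = (1 : Q[X]) := by rw [← map_ofNat C 2, ← C_mul, mul_comm, hr, C_1]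
  refine ⟨contract 2 (f 0 + f 3 * X ^ 3), r • contract 2 (f 3), ?_⟩
  rw [← h.normalForm_center, map_smul,
    expand_two_contract_of_comp_neg_X_eq h2.isRegular.left heven0,
    expand_two_contract_of_comp_neg_X_eq h2.isRegular.left heven3, smul_eq_C_mul]
  congr 1
  funext i
  fin_cases i
  · change f 0 = f 0 + f 3 * X ^ 3 - C r * f 3 * (2 * X ^ 3)
    linear_combination f 3 * X ^ 3 * hr'
  · exact hf1
  · exact hf2
  · change f 3 = C r * f 3 * 2
    linear_combination -f 3 * hr'

end OverSquares

section Hypersurface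

variable (k : Type*) [CommRing k]

/-- The ideal of the hypersurface `z² = 4xy + 4t³`, with `x, y, z, t` encoded as `X 0, …, X 3`. -/
noncomputable abbrev hypersurfaceIdeal : Ideal (MvPolynomial (Fin 4) k) :=
  Ideal.span {MvPolynomial.X 2 ^ 2 - 4 * MvPolynomial.X 0 * MvPolynomial.X 1 -
    4 * MvPolynomial.X 3 ^ 3}

/-- The inclusion of `k[x, y][t]` into `k[x, y, z, t]`, with the same encoding of the variables as
in `hypersurfaceIdeal`. -/
noncomputable def substXYT : (MvPolynomial (Fin 2) k)[X] →ₐ[k] MvPolynomial (Fin 4) k :=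
  aevalTower (MvPolynomial.rename ![0, 1]) (MvPolynomial.X 3)

variable {k}

theorem exists_sub_mem_hypersurfaceIdeal (F : MvPolynomial (Fin 4) k) :
    ∃ p q, F - (substXYT k p + substXYT k q * MvPolynomial.X 2) ∈ hypersurfaceIdeal k := by
  have hx : substXYT k (C (MvPolynomial.X 0)) = MvPolynomial.X 0 := by simp [substXYT]
  have hy : substXYT k (C (MvPolynomial.X 1)) = MvPolynomial.X 1 := by simp [substXYT]
  have ht : substXYT k X = MvPolynomial.X 3 := by simp [substXYT]
  induction F using MvPolynomial.induction_on with
  | C r => exact ⟨C (MvPolynomial.C r), 0, by simp [substXYT]⟩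
  | add F G hF hG =>
    obtain ⟨p, q, hpq⟩ := hF
    obtain ⟨p', q', hpq'⟩ := hG
    refine ⟨p + p', q + q', ?_⟩
    convert Ideal.add_mem _ hpq hpq' using 1
    rw [map_add, map_add]
    ring
  | mul_X F j hF =>
    obtain ⟨p, q, hpq⟩ := hF
    have hmul := Ideal.mul_mem_right (MvPolynomial.X j) _ hpq
    have hscale (s : (MvPolynomial (Fin 2) k)[X]) (hs : substXYT k s = MvPolynomial.X j) :
        ∃ p q, F * MvPolynomial.X j - (substXYT k p + substXYT k q * MvPolynomial.X 2) ∈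
          hypersurfaceIdeal k := by
      refine ⟨p * s, q * s, ?_⟩
      convert hmul using 1
      rw [map_mul, map_mul, hs]
      ring
    fin_cases j
    · exact hscale _ hx
    · exact hscale _ hy
    · refine ⟨(4 * C (MvPolynomial.X 0) * C (MvPolynomial.X 1) + 4 * X ^ 3) * q, p, ?_⟩
      convert Ideal.add_mem _ hmul
        (Ideal.mul_mem_left _ (substXYT k q) (Ideal.mem_span_singleton_self _)) using 1
      simp only [map_mul, map_add, map_pow, map_ofNat, hx, hy, ht, Fin.reduceFinMk]
      ring
    · exact hscale _ ht

end Hypersurface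

section CenterMap

variable {k A : Type*} [CommRing k] [Ring A] [Algebra k A] {a b c : A}

/-- The map `x ↦ a²`, `y ↦ b²`, `z ↦ ab + ba`, `t ↦ c²` from the coordinate ring of the
hypersurface to the center of the algebra generated by `a, b, c`. -/
noncomputable def toCenter (h : CdvTriple a b c) (hgen : Algebra.adjoin k {a, b, c} = ⊤) :
    (MvPolynomial (Fin 4) k ⧸ hypersurfaceIdeal k) →ₐ[k] Subalgebra.center k A :=
  Ideal.Quotient.liftₐ _
    (MvPolynomial.aeval ![⟨a ^ 2, h.a_sq_mem_center hgen⟩, ⟨b ^ 2, h.b_sq_mem_center hgen⟩,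
      ⟨a * b + b * a, h.anticommutator_mem_center hgen⟩, ⟨c ^ 2, h.c_sq_mem_center hgen⟩])
    (by
      change hypersurfaceIdeal k ≤ RingHom.ker _
      rw [Ideal.span_singleton_le_iff_mem, RingHom.mem_ker]
      refine Subtype.ext ?_
      simp only [map_sub, map_mul, map_pow, map_ofNat, MvPolynomial.aeval_X]
      exact h.anticommutator_sq)

variable (h : CdvTriple a b c) (hgen : Algebra.adjoin k {a, b, c} = ⊤)

theorem coe_toCenter_X (i : Fin 4) :
    (h.toCenter hgen (Ideal.Quotient.mk _ (MvPolynomial.X i)) : A) =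
      ![a ^ 2, b ^ 2, a * b + b * a, c ^ 2] i := by
  change (MvPolynomial.aeval _ (MvPolynomial.X i) : Subalgebra.center k A).val = _
  rw [MvPolynomial.aeval_X]
  fin_cases i <;> rfl

variable [Algebra (MvPolynomial (Fin 2) k) A] [IsScalarTower k (MvPolynomial (Fin 2) k) A]
  (hx : a ^ 2 = algebraMap (MvPolynomial (Fin 2) k) A (MvPolynomial.X 0))
  (hy : b ^ 2 = algebraMap (MvPolynomial (Fin 2) k) A (MvPolynomial.X 1))
include hx hy

theorem coe_toCenter_substXYT (p : (MvPolynomial (Fin 2) k)[X]) :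
    (h.toCenter hgen (Ideal.Quotient.mk _ (substXYT k p)) : A) = aeval (c ^ 2) p := by
  have hcomp : ((Subalgebra.center k A).val.comp (h.toCenter hgen)).comp
      ((Ideal.Quotient.mkₐ k (hypersurfaceIdeal k)).comp (substXYT k)) =
      (aeval (c ^ 2)).restrictScalars k := by
    refine Polynomial.algHom_ext' (MvPolynomial.algHom_ext fun j => ?_) ?_
    · fin_cases j <;> simp [substXYT, coe_toCenter_X, ← hx, ← hy]
    · simp [substXYT, coe_toCenter_X]
  exact DFunLike.congr_fun hcomp p

theorem coe_toCenter_mk (p q : (MvPolynomial (Fin 2) k)[X]) :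
    (h.toCenter hgen (Ideal.Quotient.mk _ (substXYT k p + substXYT k q * MvPolynomial.X 2)) : A) =
      aeval (c ^ 2) p + aeval (c ^ 2) q * (a * b + b * a) := by
  rw [map_add, map_add, map_mul, map_mul]
  simp [coe_toCenter_substXYT h hgen hx hy, coe_toCenter_X]

theorem toCenter_injective (h2 : IsLeftRegular (2 : MvPolynomial (Fin 2) k))
    (hν : Function.Injective (normalForm (Q := MvPolynomial (Fin 2) k) a b c)) :
    Function.Injective (h.toCenter hgen) := by
  refine (injective_iff_map_eq_zero _).mpr fun r hr => ?_
  obtain ⟨F, rfl⟩ := Ideal.Quotient.mk_surjective r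
  obtain ⟨p, q, hF⟩ := exists_sub_mem_hypersurfaceIdeal F
  rw [Ideal.Quotient.mk_eq_mk_iff_sub_mem _ _ |>.mpr hF] at hr ⊢
  have hpq := (h.coe_toCenter_mk hgen hx hy p q).symm.trans (congrArg Subtype.val hr)
  obtain ⟨rfl, rfl⟩ :=
    h.eq_zero_of_aeval_add_aeval_mul_anticommutator_eq_zero h2 hν hpq
  simp

theorem toCenter_surjective (h2 : IsUnit (2 : MvPolynomial (Fin 2) k))
    (hν : Function.Bijective (normalForm (Q := MvPolynomial (Fin 2) k) a b c)) :
    Function.Surjective (h.toCenter hgen) := by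
  rintro ⟨m, hm⟩
  have hcomm (g : A) : Commute g m := Subalgebra.mem_center_iff.mp hm g
  obtain ⟨p, q, hpq⟩ := h.exists_eq_of_commute h2 hx hν (hcomm a) (hcomm c)
  exact ⟨_, Subtype.ext ((h.coe_toCenter_mk hgen hx hy p q).trans hpq.symm)⟩

end CenterMap

end CdvTriple

namespace CdvAlgebra

variable (k : Type*) [Field k]

theorem cdvTriple_gen : CdvTriple (cdvGen k 0) (cdvGen k 1) (cdvGen k 2) where
  ac := by
    simpa only [map_add, map_mul, map_zero, cdvGen] using
      RingQuot.mkAlgHom_rel k (CdvRel.ac (k := k))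
  bc := by
    simpa only [map_add, map_mul, map_zero, cdvGen] using
      RingQuot.mkAlgHom_rel k (CdvRel.bc (k := k))
  ab := by
    simpa only [map_sub, map_mul, map_pow, map_ofNat, map_zero, cdvGen] using
      RingQuot.mkAlgHom_rel k (CdvRel.ab (k := k))

theorem adjoin_gen : Algebra.adjoin k {cdvGen k 0, cdvGen k 1, cdvGen k 2} = ⊤ := by
  have hrange : Set.range (cdvGen k) = {cdvGen k 0, cdvGen k 1, cdvGen k 2} := by
    ext; simp [Fin.exists_fin_succ, eq_comm]
  rw [← hrange, show cdvGen k = RingQuot.mkAlgHom k (CdvRel k) ∘ FreeAlgebra.ι k from rfl,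
    Set.range_comp, ← AlgHom.map_adjoin, FreeAlgebra.adjoin_range_ι, Algebra.map_top,
    AlgHom.range_eq_top]
  exact RingQuot.mkAlgHom_surjective k (CdvRel k)

theorem exists_algHom_gen_eq {B : Type*} [Ring B] [Algebra k B] {a b c : B}
    (h : CdvTriple a b c) : ∃ φ : CdvAlgebra k →ₐ[k] B, ∀ i, φ (cdvGen k i) = ![a, b, c] i := by
  refine ⟨RingQuot.liftAlgHom k ⟨FreeAlgebra.lift k ![a, b, c], fun _ _ hrel => ?_⟩, fun i => ?_⟩
  · cases hrel
    · simpa using h.ac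
    · simpa using h.bc
    · simp only [map_sub, map_mul, map_pow, map_ofNat, map_zero, FreeAlgebra.lift_ι_apply]
      exact h.ab
  · simp [cdvGen]

/-- The structure map of `A` as an algebra over `k[x, y]`, given by the central elements
`x ↦ a²` and `y ↦ b²`. -/
noncomputable def squaresHom : MvPolynomial (Fin 2) k →ₐ[k] CdvAlgebra k :=
  (Subalgebra.center k (CdvAlgebra k)).val.comp <| MvPolynomial.aeval
    ![⟨cdvGen k 0 ^ 2, (cdvTriple_gen k).a_sq_mem_center (adjoin_gen k)⟩,
      ⟨cdvGen k 1 ^ 2, (cdvTriple_gen k).b_sq_mem_center (adjoin_gen k)⟩]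

/-- `A` as an algebra over `k[x, y]` through `squaresHom`. -/
noncomputable instance : Algebra (MvPolynomial (Fin 2) k) (CdvAlgebra k) :=
  (squaresHom k).toRingHom.toAlgebra' fun _ m =>
    (Subalgebra.mem_center_iff.mp (Subtype.prop _) m).symm

instance : IsScalarTower k (MvPolynomial (Fin 2) k) (CdvAlgebra k) :=
  IsScalarTower.of_algebraMap_eq fun r => ((squaresHom k).commutes r).symm

theorem gen_zero_sq : cdvGen k 0 ^ 2 =
    algebraMap (MvPolynomial (Fin 2) k) (CdvAlgebra k) (MvPolynomial.X 0) := by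
  change _ = squaresHom k (MvPolynomial.X 0)
  simp [squaresHom]

theorem gen_one_sq : cdvGen k 1 ^ 2 =
    algebraMap (MvPolynomial (Fin 2) k) (CdvAlgebra k) (MvPolynomial.X 1) := by
  change _ = squaresHom k (MvPolynomial.X 1)
  simp [squaresHom]

theorem normalForm_bijective : Function.Bijective (CdvTriple.normalForm
    (Q := MvPolynomial (Fin 2) k) (cdvGen k 0) (cdvGen k 1) (cdvGen k 2)) := by
  refine ⟨?_, (cdvTriple_gen k).normalForm_surjective (gen_zero_sq k) (gen_one_sq k)
    (adjoin_eq_top_of_isScalarTower _ (adjoin_gen k))⟩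
  obtain ⟨φ, hφ⟩ := exists_algHom_gen_eq k
    (CdvTriple.leftMul (MvPolynomial.X 0) (MvPolynomial.X 1 : MvPolynomial (Fin 2) k))
  have hφQ : φ.comp (IsScalarTower.toAlgHom k (MvPolynomial (Fin 2) k) (CdvAlgebra k)) =
      IsScalarTower.toAlgHom k (MvPolynomial (Fin 2) k) _ := by
    refine MvPolynomial.algHom_ext fun j => ?_
    fin_cases j
    · change φ (algebraMap _ _ (MvPolynomial.X 0)) = algebraMap _ _ (MvPolynomial.X 0)
      rw [← gen_zero_sq, map_pow, hφ 0, ← CdvTriple.leftMulA_sq]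
      rfl
    · change φ (algebraMap _ _ (MvPolynomial.X 1)) = algebraMap _ _ (MvPolynomial.X 1)
      rw [← gen_one_sq, map_pow, hφ 1, ← CdvTriple.leftMulB_sq]
      rfl
  exact CdvTriple.normalForm_injective { φ with commutes' := DFunLike.congr_fun hφQ }
    (hφ 0) (hφ 1) (hφ 2)

end CdvAlgebra

open MvPolynomial in
theorem cdv_center_iso_general (k : Type*) [Field k] [NeZero (2 : k)] :
    ∃ φ : (MvPolynomial (Fin 4) k ⧸
          Ideal.span {(X 2 ^ 2 - 4 * X 0 * X 1 - 4 * X 3 ^ 3 :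
            MvPolynomial (Fin 4) k)}) ≃ₐ[k]
        Subalgebra.center k (CdvAlgebra k),
      (φ (Ideal.Quotient.mk _ (X 0)) : CdvAlgebra k) = cdvGen k 0 ^ 2 ∧
      (φ (Ideal.Quotient.mk _ (X 1)) : CdvAlgebra k) = cdvGen k 1 ^ 2 ∧
      (φ (Ideal.Quotient.mk _ (X 2)) : CdvAlgebra k)
        = cdvGen k 0 * cdvGen k 1 + cdvGen k 1 * cdvGen k 0 ∧
      (φ (Ideal.Quotient.mk _ (X 3)) : CdvAlgebra k) = cdvGen k 2 ^ 2 := by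
  have h := CdvAlgebra.cdvTriple_gen k
  have hgen := CdvAlgebra.adjoin_gen k
  have hx := CdvAlgebra.gen_zero_sq k
  have hy := CdvAlgebra.gen_one_sq k
  have hν := CdvAlgebra.normalForm_bijective k
  have h2 : IsUnit (2 : MvPolynomial (Fin 2) k) :=
    map_ofNat (C (R := k)) 2 ▸ (NeZero.ne (2 : k)).isUnit.map C
  have hbij : Function.Bijective (h.toCenter hgen) :=
    ⟨h.toCenter_injective hgen hx hy h2.isRegular.left hν.1,
      h.toCenter_surjective hgen hx hy h2 hν⟩
  exact ⟨AlgEquiv.ofBijective _ hbij, h.coe_toCenter_X hgen 0, h.coe_toCenter_X hgen 1,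
    h.coe_toCenter_X hgen 2, h.coe_toCenter_X hgen 3⟩

open MvPolynomial in
/-- There is a `k`-algebra isomorphism from `k[x,y,z,t]/(z² - 4xy - 4t³)` onto
the center of `A`, sending `x ↦ a²`, `y ↦ b²`, `z ↦ ab + ba`, `t ↦ c²`. -/
theorem cdv_center_iso (k : Type*) [Field k] [CharZero k] :
    ∃ φ : (MvPolynomial (Fin 4) k ⧸
          Ideal.span {(X 2 ^ 2 - 4 * X 0 * X 1 - 4 * X 3 ^ 3 :
            MvPolynomial (Fin 4) k)}) ≃ₐ[k]
        Subalgebra.center k (CdvAlgebra k),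
      (φ (Ideal.Quotient.mk _ (X 0)) : CdvAlgebra k) = cdvGen k 0 ^ 2 ∧
      (φ (Ideal.Quotient.mk _ (X 1)) : CdvAlgebra k) = cdvGen k 1 ^ 2 ∧
      (φ (Ideal.Quotient.mk _ (X 2)) : CdvAlgebra k)
        = cdvGen k 0 * cdvGen k 1 + cdvGen k 1 * cdvGen k 0 ∧
      (φ (Ideal.Quotient.mk _ (X 3)) : CdvAlgebra k) = cdvGen k 2 ^ 2 :=
  cdv_center_iso_general k
end

section
/- The sequence of left A-module homomorphisms 0 → A → A³ → A³ → A → k → 0 is exact, where the maps are: f₁ : A → A³, p ↦ (p·b, p·a, p·c); f₂ : A³ → A³, (p,q,r) ↦ (p,q,r)·M given by right multiplication by the matrix M = [[−c, 0, −a], [0, c, b], [−b, a, −2c²]] (i.e. the image is (−pc − rb, qc + ra, −pa + qb − 2rc²)); f₃ : A³ → A, (p,q,r) ↦ p·a + q·b + r·c; and ε : A → k the augmentation sending a, b, c to 0. Exactness means: f₁ is injective, the range of f₁ equals the kernel of f₂, the range of f₂ equals the kernel of f₃, the range of f₃ equals the kernel of ε, and ε is surjective. -/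
/-! The element `c` is right regular and `A / Ac` is the commutative polynomial ring `k[a, b]`.
Modulo `c` the sequence is built from the Koszul complex of `(a, b)`: exactness of the latter lifts
a cycle to a boundary up to a multiple of `c`, which is then cancelled.

Both facts about `c` come from the normal words `aʲ bˡ cⁱ`. The free `k[c]`-module on the words
`aʲ bˡ`, with scalars acting from the right, carries a left `A`-action; acting on the empty word
recovers every element of `A` as a combination of words. Multiplying by `c` on the right is scaling
by the variable of `k[c]`, and reducing modulo `c` sets that variable to zero. -/

open Polynomial

/-- The defining relations of `CdvAlgebra`, imposed on three elements of an arbitrary ring. -/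
structure IsCdvTriple_s13 {A : Type*} [Ring A] (a b c : A) : Prop where
  a_mul_c : a * c = -(c * a)
  b_mul_c : b * c = -(c * b)
  a_mul_b : a * b = b * a + 2 * c ^ 3

section Complex

variable {A : Type*} [Ring A] (a b c : A)

/-- The map `f₁ : A → A³` of the resolution, for arbitrary elements `a`, `b`, `c` of a ring. -/
def cdvMap₁ : A →ₗ[A] (Fin 3 → A) :=
  LinearMap.toSpanSingleton A (Fin 3 → A) ![b, a, c]

/-- The map `f₂ : A³ → A³` of the resolution: right multiplication by the matrix `M`. -/
def cdvMap₂ : (Fin 3 → A) →ₗ[A] (Fin 3 → A) :=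
  Matrix.vecMulLinear !![-c, 0, -a; 0, c, b; -b, a, -(2 * c ^ 2)]

/-- The map `f₃ : A³ → A` of the resolution. -/
def cdvMap₃ : (Fin 3 → A) →ₗ[A] A :=
  Fintype.linearCombination A ![a, b, c]

lemma coe_cdvMap₁ : ⇑(cdvMap₁ a b c) = fun p => ![p * b, p * a, p * c] := by
  ext p i
  fin_cases i <;> rfl

lemma coe_cdvMap₂ : ⇑(cdvMap₂ a b c) = fun v => ![-(v 0 * c) - v 2 * b, v 1 * c + v 2 * a,
    -(v 0 * a) + v 1 * b - 2 * (v 2 * c ^ 2)] := by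
  ext v i
  fin_cases i <;>
    simp [cdvMap₂, Matrix.vecMul, dotProduct, Fin.sum_univ_three, sub_eq_add_neg, two_mul, mul_add]

lemma coe_cdvMap₃ : ⇑(cdvMap₃ a b c) = fun v => v 0 * a + v 1 * b + v 2 * c := by
  ext v
  simp [cdvMap₃, Fintype.linearCombination_apply, Fin.sum_univ_three]

variable {a b c}

lemma cdvMap₂_cdvMap₁ (h : IsCdvTriple_s13 a b c) (p : A) : cdvMap₂ a b c (cdvMap₁ a b c p) = 0 := by
  rw [coe_cdvMap₁, coe_cdvMap₂]
  ext i
  fin_cases i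
  · simp [mul_assoc, h.b_mul_c]
  · simp [mul_assoc, h.a_mul_c]
  · simp [mul_assoc, h.a_mul_b, mul_add, two_mul, pow_succ']

lemma cdvMap₃_cdvMap₂ (h : IsCdvTriple_s13 a b c) (v : Fin 3 → A) :
    cdvMap₃ a b c (cdvMap₂ a b c v) = 0 := by
  have hc : c ^ 2 * c = c ^ 3 := (pow_succ c 2).symm
  simp only [coe_cdvMap₂, coe_cdvMap₃, Matrix.cons_val, sub_mul, add_mul, neg_mul, mul_assoc,
    h.a_mul_c, h.b_mul_c, h.a_mul_b, hc, two_mul, mul_add, mul_neg]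
  abel

lemma cdvMap₁_injective (hc : IsRightRegular c) : Function.Injective (cdvMap₁ a b c) := by
  intro p q hpq
  rw [coe_cdvMap₁] at hpq
  exact hc (congrFun hpq 2)

lemma exact_cdvMap₁_cdvMap₂ {P : Type*} [Ring P] (h : IsCdvTriple_s13 a b c) (hc : IsRightRegular c)
    {π : A →+* P} (hker : RingHom.ker π = Ideal.span {c}) (hb : IsRightRegular (π b)) :
    Function.Exact (cdvMap₁ a b c) (cdvMap₂ a b c) := by
  intro v
  refine ⟨fun hv => ?_, ?_⟩
  · rw [coe_cdvMap₂] at hv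
    have hv₀ : -(v 0 * c) - v 2 * b = 0 := congrFun hv 0
    have hv₁ : v 1 * c + v 2 * a = 0 := congrFun hv 1
    have hπc : π c = 0 := RingHom.mem_ker.1 (hker ▸ Ideal.mem_span_singleton_self c)
    have hπv : π (v 2) = 0 := by
      apply isRightRegular_iff_left_eq_zero_of_mul.1 hb
      simpa [hπc] using congrArg π hv₀
    obtain ⟨p, hp⟩ : ∃ p, p * c = v 2 := by
      rwa [← RingHom.mem_ker, hker, Ideal.mem_span_singleton'] at hπv
    rw [← hp, mul_assoc] at hv₀ hv₁
    have hpb : p * b = v 0 := hc <| by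
      calc p * b * c = -(p * (c * b)) := by rw [mul_assoc, h.b_mul_c, mul_neg]
        _ = v 0 * c := by rw [← sub_eq_zero, ← hv₀]; abel
    have hpa : p * a = v 1 := hc <| by
      calc p * a * c = -(p * (c * a)) := by rw [mul_assoc, h.a_mul_c, mul_neg]
        _ = v 1 * c := (eq_neg_of_add_eq_zero_left hv₁).symm
    refine ⟨p, ?_⟩
    rw [coe_cdvMap₁]
    ext i
    fin_cases i
    exacts [hpb, hpa, hp]
  · rintro ⟨p, rfl⟩
    exact cdvMap₂_cdvMap₁ h p

lemma exists_koszul_of_mul_add_mul_eq_zero {P : Type*} [CommRing P] {x y : P}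
    (hy : IsRegular y) (hxy : ∀ f, y ∣ f * x → y ∣ f) {f g : P} (hfg : f * x + g * y = 0) :
    ∃ r, f = -(r * y) ∧ g = r * x := by
  obtain ⟨r, rfl⟩ : y ∣ f := hxy f ⟨-g, by linear_combination hfg⟩
  exact ⟨-r, by ring, hy.right <| by linear_combination hfg⟩

lemma exact_cdvMap₂_cdvMap₃ {P : Type*} [CommRing P] (h : IsCdvTriple_s13 a b c)
    (hc : IsRightRegular c) {π : A →+* P} (hπ : Function.Surjective π)
    (hker : RingHom.ker π = Ideal.span {c}) (hb : IsRegular (π b))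
    (hab : ∀ f, π b ∣ f * π a → π b ∣ f) :
    Function.Exact (cdvMap₂ a b c) (cdvMap₃ a b c) := by
  intro v
  refine ⟨fun hv => ?_, ?_⟩
  · have exists_mul_c (x : A) (hx : π x = 0) : ∃ y, y * c = x := by
      rwa [← RingHom.mem_ker, hker, Ideal.mem_span_singleton'] at hx
    have hπc : π c = 0 := RingHom.mem_ker.1 (hker ▸ Ideal.mem_span_singleton_self c)
    have hπv : π (v 0) * π a + π (v 1) * π b = 0 := by
      simpa [coe_cdvMap₃, hπc] using congrArg π hv
    obtain ⟨f, hf₀, hf₁⟩ := exists_koszul_of_mul_add_mul_eq_zero hb hab hπv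
    obtain ⟨r, rfl⟩ := hπ f
    obtain ⟨p, hp⟩ := exists_mul_c (v 0 + r * b) (by simp [hf₀])
    obtain ⟨q, hq⟩ := exists_mul_c (v 1 - r * a) (by simp [hf₁])
    set w := cdvMap₂ a b c ![-p, q, r] with hw
    rw [coe_cdvMap₂] at hw
    have hw₀ : w 0 = v 0 := by simp [hw, hp]
    have hw₁ : w 1 = v 1 := by simp [hw, hq]
    -- The last coordinates agree after multiplying by `c`, as both `w` and `v` are cycles.
    have hw₂ : w 2 = v 2 := hc <| by
      have hwv : cdvMap₃ a b c w = cdvMap₃ a b c v := (cdvMap₃_cdvMap₂ h _).trans hv.symm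
      simpa [coe_cdvMap₃, hw₀, hw₁] using hwv
    refine ⟨![-p, q, r], ?_⟩
    ext i
    fin_cases i
    exacts [hw₀, hw₁, hw₂]
  · rintro ⟨w, rfl⟩
    exact cdvMap₃_cdvMap₂ h w

end Complex

lemma ker_eq_span_range_of_adjoin_eq_top {R A ι : Type*} [CommRing R] [Ring A] [Algebra R A]
    {x : ι → A} (hx : Algebra.adjoin R (Set.range x) = ⊤) (ε : A →ₐ[R] R) (hε : ∀ i, ε (x i) = 0) :
    RingHom.ker ε = Ideal.span (Set.range x) := by
  have sub_mem (y : A) : y - algebraMap R A (ε y) ∈ Ideal.span (Set.range x) := by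
    have hy : y ∈ Algebra.adjoin R (Set.range x) := hx ▸ Algebra.mem_top
    induction hy using Algebra.adjoin_induction with
    | mem y hy =>
      obtain ⟨i, rfl⟩ := hy
      simpa [hε] using Ideal.subset_span (Set.mem_range_self i)
    | algebraMap r => simp
    | add y z _ _ ihy ihz => simpa [add_sub_add_comm] using add_mem ihy ihz
    | mul y z _ _ ihy ihz =>
      have hmul : y * z - algebraMap R A (ε (y * z)) =
          y * (z - algebraMap R A (ε z)) + algebraMap R A (ε z) * (y - algebraMap R A (ε y)) := by
        rw [mul_sub, mul_sub, ← Algebra.commutes (ε z) y, ← map_mul, map_mul, mul_comm (ε z)]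
        abel
      rw [hmul]
      exact add_mem (Ideal.mul_mem_left _ _ ihz) (Ideal.mul_mem_left _ _ ihy)
  refine le_antisymm (fun y hy => ?_) (Ideal.span_le.2 ?_)
  · simpa [RingHom.mem_ker.1 hy] using sub_mem y
  · rintro _ ⟨i, rfl⟩
    exact hε i

lemma exact_cdvMap₃_algHom {R A : Type*} [CommRing R] [Ring A] [Algebra R A] {x : Fin 3 → A}
    (hx : Algebra.adjoin R (Set.range x) = ⊤) (ε : A →ₐ[R] R) (hε : ∀ i, ε (x i) = 0) :
    Function.Exact (cdvMap₃ (x 0) (x 1) (x 2)) ε := by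
  intro y
  have hrange : LinearMap.range (cdvMap₃ (x 0) (x 1) (x 2)) = Ideal.span (Set.range x) := by
    have hx_eq : ![x 0, x 1, x 2] = x := FinVec.etaExpand_eq x
    rw [cdvMap₃, Fintype.range_linearCombination, hx_eq]
  rw [← RingHom.mem_ker, ker_eq_span_range_of_adjoin_eq_top hx ε hε, ← hrange]
  rfl

lemma semiconjBy_neg_pow_of_odd {M : Type*} [Monoid M] [HasDistribNeg M] {c x : M}
    (h : SemiconjBy c x (-x)) {n : ℕ} (hn : Odd n) :
    SemiconjBy (c ^ n) x (-x) := by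
  obtain ⟨m, rfl⟩ := hn
  have h_neg : SemiconjBy c (-x) x := by simpa using h.neg_right
  have h_sq : Commute (c ^ 2) (-x) := by
    rw [pow_two]
    exact h.mul_left h_neg
  rw [pow_succ, pow_mul]
  exact SemiconjBy.mul_left (h_sq.pow_left m) h

lemma mul_pow_of_semiconjBy_neg {M : Type*} [Monoid M] [HasDistribNeg M] {d x : M}
    (h : SemiconjBy d x (-x)) (n : ℕ) : d * x ^ n = x ^ n * ((-1) ^ n * d) := by
  rw [(h.pow_right n).eq, neg_pow, ((Commute.neg_one_left (x ^ n)).pow_left n).eq, mul_assoc]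

namespace IsCdvTriple_s13

variable {A : Type*} [Ring A] {a b c : A}

lemma semiconjBy_a (h : IsCdvTriple_s13 a b c) : SemiconjBy c a (-a) := by
  simp [SemiconjBy, h.a_mul_c]

lemma semiconjBy_b (h : IsCdvTriple_s13 a b c) : SemiconjBy c b (-b) := by
  simp [SemiconjBy, h.b_mul_c]

lemma c_mul_word (h : IsCdvTriple_s13 a b c) (j l : ℕ) :
    c * (a ^ j * b ^ l) = a ^ j * b ^ l * ((-1) ^ (j + l) * c) := by
  have hca := mul_pow_of_semiconjBy_neg h.semiconjBy_a j
  have hcb := mul_pow_of_semiconjBy_neg h.semiconjBy_b l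
  rw [← mul_assoc, hca, mul_assoc, mul_assoc, hcb, pow_add]
  rcases neg_one_pow_eq_or A j with hj | hj <;> simp [hj, mul_assoc]

lemma b_mul_a_pow (h : IsCdvTriple_s13 a b c) (j : ℕ) :
    b * a ^ j = a ^ j * b - a ^ (j - 1) * ((1 - (-1) ^ j) * c ^ 3) := by
  have hba : b * a = a * b - 2 * c ^ 3 := eq_sub_of_add_eq h.a_mul_b.symm
  induction j with
  | zero => simp
  | succ j ih =>
    have hca : c ^ 3 * a ^ j = a ^ j * ((-1) ^ j * c ^ 3) :=
      mul_pow_of_semiconjBy_neg (semiconjBy_neg_pow_of_odd h.semiconjBy_a (by decide)) j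
    have ha : a * (a ^ (j - 1) * ((1 - (-1) ^ j) * c ^ 3)) = a ^ j * ((1 - (-1) ^ j) * c ^ 3) := by
      rcases j with _ | j
      · simp
      · rw [Nat.add_sub_cancel, ← mul_assoc, ← pow_succ']
    calc b * a ^ (j + 1) = a * (b * a ^ j) - 2 * (c ^ 3 * a ^ j) := by
          rw [pow_succ', ← mul_assoc, hba, sub_mul, mul_assoc, mul_assoc]
      _ = a ^ (j + 1) * b - a ^ j * ((1 - (-1) ^ j) * c ^ 3)
            - 2 * (a ^ j * ((-1) ^ j * c ^ 3)) := by
          rw [ih, hca, mul_sub, ha, ← mul_assoc, ← pow_succ']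
      _ = a ^ (j + 1) * b - a ^ (j + 1 - 1) * ((1 - (-1) ^ (j + 1)) * c ^ 3) := by
          rw [Nat.add_sub_cancel, pow_succ (-1 : A)]
          noncomm_ring

lemma b_mul_word (h : IsCdvTriple_s13 a b c) (j l : ℕ) :
    b * (a ^ j * b ^ l) = a ^ j * b ^ (l + 1)
      - a ^ (j - 1) * b ^ l * ((-1) ^ l * (1 - (-1) ^ j) * c ^ 3) := by
  have hcb : c ^ 3 * b ^ l = b ^ l * ((-1) ^ l * c ^ 3) :=
    mul_pow_of_semiconjBy_neg (semiconjBy_neg_pow_of_odd h.semiconjBy_b (by decide)) l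
  rw [← mul_assoc, h.b_mul_a_pow, sub_mul, mul_assoc, ← pow_succ']
  congr 1
  rcases neg_one_pow_eq_or A j with hj | hj
  · simp [hj]
  · rcases neg_one_pow_eq_or A l with hl | hl <;>
      simp [hj, hl, hcb, mul_assoc, add_mul, mul_add, one_add_one_eq_two, two_mul]

end IsCdvTriple_s13

/-- The free `R`-module on the words `aʲ bˡ`, indexed by `(j, l)`. For `R = k[c]` acting from the
right it models `CdvAlgebra k`, with `p • aʲ bˡ` standing for `aʲ bˡ p(c)`. -/
abbrev CdvWords (R : Type*) [CommRing R] : Type _ :=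
  ℕ × ℕ →₀ R

namespace CdvWords

section Operators

variable {R : Type*} [CommRing R] (t : R)

variable (R) in
/-- Left multiplication by `a` on words. -/
noncomputable def opA : Module.End R (CdvWords R) :=
  Finsupp.linearCombination R fun m => .single (m.1 + 1, m.2) 1

/-- Left multiplication by `b` on words, where `t : R` plays the role of `c`. At `j = 0` the
exponent `j - 1` is junk, but its coefficient vanishes. -/
noncomputable def opB : Module.End R (CdvWords R) :=
  Finsupp.linearCombination R fun m => .single (m.1, m.2 + 1) 1
    - .single (m.1 - 1, m.2) ((-1) ^ m.2 * (1 - (-1) ^ m.1) * t ^ 3)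

/-- Left multiplication by `c` on words, where `t : R` plays the role of `c`. -/
noncomputable def opC : Module.End R (CdvWords R) :=
  Finsupp.linearCombination R fun m => .single m ((-1) ^ (m.1 + m.2) * t)

lemma opA_single (j l : ℕ) (r : R) : opA R (.single (j, l) r) = .single (j + 1, l) r := by
  simp [opA]

lemma opB_single (j l : ℕ) (r : R) : opB t (.single (j, l) r) = .single (j, l + 1) r
    - .single (j - 1, l) (r * ((-1) ^ l * (1 - (-1) ^ j) * t ^ 3)) := by
  simp only [opB, Finsupp.linearCombination_single, smul_sub, Finsupp.smul_single, smul_eq_mul,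
    mul_one]

lemma opC_single (j l : ℕ) (r : R) :
    opC t (.single (j, l) r) = .single (j, l) (r * ((-1) ^ (j + l) * t)) := by
  rw [opC, Finsupp.linearCombination_single, Finsupp.smul_single, smul_eq_mul]

lemma opC_pow_single (n j l : ℕ) (r : R) :
    (opC t ^ n) (.single (j, l) r) = .single (j, l) (r * ((-1) ^ (j + l) * t) ^ n) := by
  induction n with
  | zero => simp
  | succ n ih => rw [pow_succ', Module.End.mul_apply, ih, opC_single, mul_assoc, ← pow_succ]

lemma isCdvTriple_op : IsCdvTriple_s13 (opA R) (opB t) (opC t) where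
  a_mul_c := by
    refine Finsupp.lhom_ext fun ⟨j, l⟩ r => ?_
    simp only [Module.End.mul_apply, LinearMap.neg_apply, opA_single, opC_single,
      ← Finsupp.single_neg]
    ring_nf
  b_mul_c := by
    refine Finsupp.lhom_ext fun ⟨j, l⟩ r => ?_
    rcases j with _ | j <;>
      simp only [Module.End.mul_apply, LinearMap.neg_apply, opB_single, opC_single, map_sub,
        neg_sub', ← Finsupp.single_neg, Nat.add_sub_cancel, pow_zero, sub_self, mul_zero, zero_mul,
        Finsupp.single_zero, map_zero, neg_zero] <;>
      ring_nf
  a_mul_b := by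
    refine Finsupp.lhom_ext fun ⟨j, l⟩ r => ?_
    set z := r * ((-1) ^ (j + l) * t) ^ 3 with hz
    set w := r * ((-1) ^ l * (1 - (-1) ^ j) * t ^ 3) with hw
    have hsign : r * ((-1) ^ l * (1 - (-1) ^ (j + 1)) * t ^ 3) = w + (z + z) := by
      rcases neg_one_pow_eq_or R j with hj | hj <;> rcases neg_one_pow_eq_or R l with hl | hl <;>
        simp only [hw, hz, pow_add, hj, hl] <;> ring
    have hA : opA R (.single (j - 1, l) w) = .single (j, l) w := by
      rcases j with _ | j
      · simp [hw]
      · rw [opA_single, Nat.add_sub_cancel]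
    simp only [Module.End.mul_apply, LinearMap.add_apply, opA_single, opB_single, map_sub, two_mul,
      opC_pow_single, Nat.add_sub_cancel, hsign, Finsupp.single_add, ← hz, ← hw, hA]
    abel

end Operators

section Evaluation

variable {k A : Type*} [CommRing k] [Ring A] [Algebra k A] {a b c : A}

variable (k a b c) in
/-- Evaluation of a combination of normal words: `p(c)` times the word `aʲ bˡ` goes to
`aʲ bˡ p(c)`. -/
noncomputable def evalWords : CdvWords k[X] →ₗ[k] A :=
  Finsupp.lsum k fun m => LinearMap.mulLeft k (a ^ m.1 * b ^ m.2) ∘ₗ (aeval c).toLinearMap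

lemma evalWords_single (j l : ℕ) (p : k[X]) :
    evalWords k a b c (.single (j, l) p) = a ^ j * b ^ l * aeval c p := by
  simp [evalWords, mul_assoc]

lemma evalWords_smul (p : k[X]) (v : CdvWords k[X]) :
    evalWords k a b c (p • v) = evalWords k a b c v * aeval c p := by
  induction v using Finsupp.induction_linear with
  | zero => simp
  | add v w hv hw => simp only [smul_add, map_add, hv, hw, add_mul]
  | single m q =>
    rw [Finsupp.smul_single, smul_eq_mul, mul_comm, evalWords_single, evalWords_single, map_mul,
      ← mul_assoc]

lemma evalWords_apply_of_single {T : Module.End k[X] (CdvWords k[X])} {x : A}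
    (hT : ∀ j l, evalWords k a b c (T (.single (j, l) 1)) = x * (a ^ j * b ^ l))
    (v : CdvWords k[X]) : evalWords k a b c (T v) = x * evalWords k a b c v := by
  induction v using Finsupp.induction_linear with
  | zero => simp
  | add v w hv hw => simp only [map_add, hv, hw, mul_add]
  | single m p =>
    have hp : Finsupp.single m p = p • Finsupp.single m (1 : k[X]) := by simp
    rw [hp, map_smul, evalWords_smul, hT, evalWords_smul, evalWords_single, map_one, mul_one,
      mul_assoc x]

lemma evalWords_opA (v : CdvWords k[X]) :
    evalWords k a b c (opA k[X] v) = a * evalWords k a b c v :=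
  evalWords_apply_of_single (fun j l => by
    rw [opA_single, evalWords_single, map_one, mul_one, pow_succ', mul_assoc]) v

lemma evalWords_opB (h : IsCdvTriple_s13 a b c) (v : CdvWords k[X]) :
    evalWords k a b c (opB X v) = b * evalWords k a b c v :=
  evalWords_apply_of_single (fun j l => by
    rw [opB_single, map_sub, evalWords_single, evalWords_single, one_mul, h.b_mul_word]
    simp) v

lemma evalWords_opC (h : IsCdvTriple_s13 a b c) (v : CdvWords k[X]) :
    evalWords k a b c (opC X v) = c * evalWords k a b c v :=
  evalWords_apply_of_single (fun j l => by
    rw [opC_single, evalWords_single, one_mul, h.c_mul_word]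
    simp) v

end Evaluation

end CdvWords

namespace CdvAlgebra

open CdvWords

variable (k : Type*) [Field k]

lemma isCdvTriple_cdvGen : IsCdvTriple_s13 (cdvGen k 0) (cdvGen k 1) (cdvGen k 2) where
  a_mul_c := by
    have h := RingQuot.mkAlgHom_rel k (CdvRel.ac (k := k))
    simp only [map_add, map_mul, map_zero] at h
    exact eq_neg_of_add_eq_zero_left h
  b_mul_c := by
    have h := RingQuot.mkAlgHom_rel k (CdvRel.bc (k := k))
    simp only [map_add, map_mul, map_zero] at h
    exact eq_neg_of_add_eq_zero_left h
  a_mul_b := by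
    have h := RingQuot.mkAlgHom_rel k (CdvRel.ab (k := k))
    simp only [map_sub, map_mul, map_zero, map_pow, map_ofNat] at h
    rw [sub_sub, sub_eq_zero] at h
    exact h

lemma adjoin_range_cdvGen : Algebra.adjoin k (Set.range (cdvGen k)) = ⊤ := by
  have hrange : Set.range (cdvGen k) =
      RingQuot.mkAlgHom k (CdvRel k) '' Set.range (FreeAlgebra.ι k) :=
    Set.range_comp _ _
  rw [hrange, ← AlgHom.map_adjoin, FreeAlgebra.adjoin_range_ι, Algebra.map_top,
    AlgHom.range_eq_top]
  exact RingQuot.mkAlgHom_surjective k (CdvRel k)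

variable {k}

/-- The homomorphism out of `CdvAlgebra k` determined by images of the generators which satisfy the
defining relations. -/
noncomputable def lift {B : Type*} [Ring B] [Algebra k B] {x y z : B} (h : IsCdvTriple_s13 x y z) :
    CdvAlgebra k →ₐ[k] B :=
  RingQuot.liftAlgHom k ⟨FreeAlgebra.lift k ![x, y, z], by
    rintro _ _ (_ | _ | _)
    · simp [h.a_mul_c]
    · simp [h.b_mul_c]
    · simp [h.a_mul_b, two_mul]⟩

lemma lift_cdvGen {B : Type*} [Ring B] [Algebra k B] {x y z : B} (h : IsCdvTriple_s13 x y z)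
    (i : Fin 3) : lift h (cdvGen k i) = ![x, y, z] i := by
  simp only [lift, cdvGen, RingQuot.liftAlgHom_mkAlgHom_apply, FreeAlgebra.lift_ι_apply]

variable (k) in
/-- The left action of `CdvAlgebra k` on combinations of normal words. -/
noncomputable def wordRep : CdvAlgebra k →ₐ[k] Module.End k[X] (CdvWords k[X]) :=
  lift (isCdvTriple_op X)

/-- The expansion of an element in the normal words `aʲ bˡ cⁱ`: the result of acting on the empty
word. -/
noncomputable def normalForm (x : CdvAlgebra k) : CdvWords k[X] :=
  wordRep k x (.single (0, 0) 1)

lemma evalWords_wordRep (x : CdvAlgebra k) (v : CdvWords k[X]) :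
    evalWords k (cdvGen k 0) (cdvGen k 1) (cdvGen k 2) (wordRep k x v) =
      x * evalWords k (cdvGen k 0) (cdvGen k 1) (cdvGen k 2) v := by
  have hx : x ∈ Algebra.adjoin k (Set.range (cdvGen k)) := adjoin_range_cdvGen k ▸ Algebra.mem_top
  induction hx using Algebra.adjoin_induction generalizing v with
  | mem x hx =>
    obtain ⟨i, rfl⟩ := hx
    rw [wordRep, lift_cdvGen]
    fin_cases i
    exacts [evalWords_opA v, evalWords_opB (isCdvTriple_cdvGen k) v,
      evalWords_opC (isCdvTriple_cdvGen k) v]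
  | algebraMap r => rw [AlgHom.commutes, Module.algebraMap_end_apply, map_smul, Algebra.smul_def]
  | add x y _ _ hx hy => rw [map_add, LinearMap.add_apply, map_add, hx, hy, add_mul]
  | mul x y _ _ hx hy => rw [map_mul, Module.End.mul_apply, hx, hy, mul_assoc]

lemma evalWords_normalForm (x : CdvAlgebra k) :
    evalWords k (cdvGen k 0) (cdvGen k 1) (cdvGen k 2) (normalForm x) = x := by
  simp [normalForm, evalWords_wordRep, evalWords_single]

lemma normalForm_mul_cdvGen_two (x : CdvAlgebra k) :
    normalForm (x * cdvGen k 2) = (X : k[X]) • normalForm x := by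
  have hc : wordRep k (cdvGen k 2) (.single (0, 0) 1) = (X : k[X]) • .single (0, 0) 1 := by
    rw [wordRep, lift_cdvGen]
    simp [opC_single]
  rw [normalForm, map_mul, Module.End.mul_apply, hc, map_smul, normalForm]

lemma isRightRegular_cdvGen_two : IsRightRegular (cdvGen k 2) := by
  refine isRightRegular_iff_left_eq_zero_of_mul.2 fun x hx => ?_
  have hX : (X : k[X]) • normalForm x = 0 := by
    rw [← normalForm_mul_cdvGen_two, hx]
    simp [normalForm]
  rw [← evalWords_normalForm x, (smul_eq_zero.1 hX).resolve_left X_ne_zero, map_zero]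

variable (k) in
/-- Reduction modulo `c`, with `k[a, b]` realized as `k[a][b]`. -/
noncomputable def modC : CdvAlgebra k →ₐ[k] k[X][X] :=
  lift (x := C X) (y := X) (z := 0) ⟨by simp, by simp, by rw [mul_comm]; simp⟩

lemma modC_cdvGen (i : Fin 3) : modC k (cdvGen k i) = ![C X, X, 0] i :=
  lift_cdvGen _ i

lemma modC_surjective : Function.Surjective (modC k) := by
  have hC (p : k[X]) : modC k (aeval (cdvGen k 0) p) = C p := by
    have hp : aeval (C X : k[X][X]) p = C p := by
      simpa using aeval_algHom_apply (CAlgHom (R := k) (A := k[X])) X p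
    rw [← aeval_algHom_apply, modC_cdvGen]
    simpa using hp
  intro f
  induction f using Polynomial.induction_on' with
  | add f g hf hg =>
    obtain ⟨x, rfl⟩ := hf
    obtain ⟨y, rfl⟩ := hg
    exact ⟨x + y, map_add _ _ _⟩
  | monomial l p =>
    refine ⟨aeval (cdvGen k 0) p * cdvGen k 1 ^ l, ?_⟩
    simp [hC, modC_cdvGen, C_mul_X_pow_eq_monomial]

lemma coeff_coeff_modC_evalWords (v : CdvWords k[X]) (j l : ℕ) :
    ((modC k (evalWords k (cdvGen k 0) (cdvGen k 1) (cdvGen k 2) v)).coeff l).coeff j =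
      (v (j, l)).coeff 0 := by
  induction v using Finsupp.induction_linear with
  | zero => simp
  | add v w hv hw => simp [hv, hw]
  | single m p =>
    obtain ⟨j', l'⟩ := m
    have hp : modC k (aeval (cdvGen k 2) p) = C (C (p.coeff 0)) := by
      rw [← aeval_algHom_apply, modC_cdvGen]
      exact (coeff_zero_eq_aeval_zero' p).symm
    have hword : modC k (cdvGen k 0 ^ j' * cdvGen k 1 ^ l' * aeval (cdvGen k 2) p) =
        monomial l' (monomial j' (p.coeff 0)) := by
      simp only [map_mul, map_pow, modC_cdvGen, hp, Matrix.cons_val]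
      rw [← C_mul_X_pow_eq_monomial, ← C_mul_X_pow_eq_monomial, C_mul, C_pow]
      ring
    rw [evalWords_single, hword, coeff_monomial, Finsupp.single_apply]
    rcases eq_or_ne l' l with rfl | hl
    · rcases eq_or_ne j' j with rfl | hj
      · simp
      · simp [hj, coeff_monomial]
    · simp [hl]

lemma ker_modC : RingHom.ker (modC k : CdvAlgebra k →+* k[X][X]) = Ideal.span {cdvGen k 2} := by
  ext x
  rw [RingHom.mem_ker, Ideal.mem_span_singleton']
  constructor
  · intro hx
    have hdvd (m : ℕ × ℕ) : (normalForm x m).divX * X = normalForm x m := by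
      have hcoeff : (normalForm x m).coeff 0 = 0 := by
        rw [← coeff_coeff_modC_evalWords, evalWords_normalForm]
        simp [show modC k x = 0 from hx]
      simpa [hcoeff] using divX_mul_X_add (normalForm x m)
    let w := (normalForm x).mapRange divX divX_zero
    have hw : normalForm x = (X : k[X]) • w := by
      ext m : 1
      rw [Finsupp.smul_apply, Finsupp.mapRange_apply, smul_eq_mul, mul_comm, hdvd]
    refine ⟨evalWords k (cdvGen k 0) (cdvGen k 1) (cdvGen k 2) w, ?_⟩
    rw [← evalWords_normalForm x, hw, evalWords_smul, aeval_X]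
  · rintro ⟨y, rfl⟩
    simp [modC_cdvGen]

lemma modC_b_dvd_of_dvd_mul_modC_a (f : k[X][X])
    (hf : modC k (cdvGen k 1) ∣ f * modC k (cdvGen k 0)) :
    modC k (cdvGen k 1) ∣ f := by
  simpa [modC_cdvGen, X_dvd_iff] using hf

end CdvAlgebra

theorem cdv_free_resolution_exact_general (k : Type*) [Field k]
    (ε : CdvAlgebra k →ₐ[k] k)
    (hεa : ε (cdvGen k 0) = 0) (hεb : ε (cdvGen k 1) = 0)
    (hεc : ε (cdvGen k 2) = 0) :
    letI a := cdvGen k 0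
    letI b := cdvGen k 1
    letI c := cdvGen k 2
    letI f₁ : CdvAlgebra k → (Fin 3 → CdvAlgebra k) :=
      fun p => ![p * b, p * a, p * c]
    letI f₂ : (Fin 3 → CdvAlgebra k) → (Fin 3 → CdvAlgebra k) :=
      fun v => ![-(v 0 * c) - v 2 * b, v 1 * c + v 2 * a,
        -(v 0 * a) + v 1 * b - 2 * (v 2 * c ^ 2)]
    letI f₃ : (Fin 3 → CdvAlgebra k) → CdvAlgebra k :=
      fun v => v 0 * a + v 1 * b + v 2 * c
    IsLinearMap (CdvAlgebra k) f₁ ∧ IsLinearMap (CdvAlgebra k) f₂ ∧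
    IsLinearMap (CdvAlgebra k) f₃ ∧
    Function.Injective f₁ ∧
    Set.range f₁ = {v | f₂ v = 0} ∧
    Set.range f₂ = {v | f₃ v = 0} ∧
    Set.range f₃ = {x | ε x = 0} ∧
    Function.Surjective ε := by
  have hε (i : Fin 3) : ε (cdvGen k i) = 0 := by
    fin_cases i
    exacts [hεa, hεb, hεc]
  have htriple := CdvAlgebra.isCdvTriple_cdvGen k
  have hc : IsRightRegular (cdvGen k 2) := CdvAlgebra.isRightRegular_cdvGen_two
  have hb : IsRegular (CdvAlgebra.modC k (cdvGen k 1)) := by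
    simp [CdvAlgebra.modC_cdvGen]
  have exact₁₂ := exact_cdvMap₁_cdvMap₂ htriple hc CdvAlgebra.ker_modC hb.right
  have exact₂₃ := exact_cdvMap₂_cdvMap₃ htriple hc CdvAlgebra.modC_surjective CdvAlgebra.ker_modC
    hb CdvAlgebra.modC_b_dvd_of_dvd_mul_modC_a
  have exact₃ε := exact_cdvMap₃_algHom (CdvAlgebra.adjoin_range_cdvGen k) ε hε
  rw [← coe_cdvMap₁, ← coe_cdvMap₂, ← coe_cdvMap₃]
  exact ⟨LinearMap.isLinear _, LinearMap.isLinear _, LinearMap.isLinear _, cdvMap₁_injective hc,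
    Set.ext fun v => (exact₁₂ v).symm, Set.ext fun v => (exact₂₃ v).symm,
    Set.ext fun x => (exact₃ε x).symm, fun r => ⟨algebraMap k _ r, ε.commutes r⟩⟩

/-- The sequence `0 → A → A³ → A³ → A → k → 0` of left `A`-module homomorphisms
`f₁ : p ↦ (pb, pa, pc)`, `f₂ : (p,q,r) ↦ (-pc - rb, qc + ra, -pa + qb - 2rc²)`
(right multiplication by the matrix `[[-c,0,-a],[0,c,b],[-b,a,-2c²]]`),
`f₃ : (p,q,r) ↦ pa + qb + rc`, and the augmentation `ε` (sending `a,b,c ↦ 0`)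
is exact: `f₁` is injective, `range f₁ = ker f₂`, `range f₂ = ker f₃`,
`range f₃ = ker ε`, and `ε` is surjective. -/
theorem cdv_free_resolution_exact (k : Type*) [Field k] [CharZero k]
    (ε : CdvAlgebra k →ₐ[k] k)
    (hεa : ε (cdvGen k 0) = 0) (hεb : ε (cdvGen k 1) = 0)
    (hεc : ε (cdvGen k 2) = 0) :
    letI a := cdvGen k 0
    letI b := cdvGen k 1
    letI c := cdvGen k 2
    letI f₁ : CdvAlgebra k → (Fin 3 → CdvAlgebra k) :=
      fun p => ![p * b, p * a, p * c]
    letI f₂ : (Fin 3 → CdvAlgebra k) → (Fin 3 → CdvAlgebra k) :=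
      fun v => ![-(v 0 * c) - v 2 * b, v 1 * c + v 2 * a,
        -(v 0 * a) + v 1 * b - 2 * (v 2 * c ^ 2)]
    letI f₃ : (Fin 3 → CdvAlgebra k) → CdvAlgebra k :=
      fun v => v 0 * a + v 1 * b + v 2 * c
    IsLinearMap (CdvAlgebra k) f₁ ∧ IsLinearMap (CdvAlgebra k) f₂ ∧
    IsLinearMap (CdvAlgebra k) f₃ ∧
    Function.Injective f₁ ∧
    Set.range f₁ = {v | f₂ v = 0} ∧
    Set.range f₂ = {v | f₃ v = 0} ∧
    Set.range f₃ = {x | ε x = 0} ∧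
    Function.Surjective ε :=
  cdv_free_resolution_exact_general k ε hεa hεb hεc
end
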